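/- arXiv:1804.02349 — 4 statements merged into one kernel-verified Lean document; each statement's English description precedes it below -/
import Mathlib

section
/- Let f be an entire function of finite order. If there exists a set Ω ⊂ ℂ of zero area density such that f is bounded on ℂ \ Ω, then f is constant. -/
open MeasureTheory Filter

/-!
For `N` at least `1` and at least the bound of `f` off `Ω`, the function `u = log⁺ ‖f / N‖` vanishes
off `Ω` and is subharmonic by Jensen's formula. Suppose `Ω` occupies area at most `δ R ^ 2` in
`D(0, R)` for large `R`. When `u` is averaged over `D(c, R)` with `|c| ≤ R`, only points of
`Ω ∩ D(0, 2R)` contribute, so the maximum `B(R)` of `u` over `|z| ≤ R` satisfies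
`B(R) ≤ (4 δ / π) B(2R)`. Finite order gives `B(R) = O(R ^ ρ)`, and iterating the inequality forces
`B = 0` as soon as `(4 δ / π) 2 ^ ρ < 1`. Hence `f` is bounded, and Liouville's theorem applies.
-/

section PolarCoordinates

open Real Set Metric

variable {E : Type*} [NormedAddCommGroup E] [NormedSpace ℝ E]

lemma add_polarCoord_symm_eq_circleMap (c : ℂ) (p : ℝ × ℝ) :
    c + Complex.polarCoord.symm p = circleMap c p.1 p.2 := by
  rw [Complex.polarCoord_symm_apply, circleMap, Complex.exp_mul_I]
  push_cast
  rfl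

lemma setIntegral_circleMap_eq_smul_circleAverage (u : ℂ → E) (c : ℂ) (r : ℝ) :
    ∫ θ in Ioo (-π) π, u (circleMap c r θ) = (2 * π) • circleAverage u c r := by
  rw [circleAverage_eq_integral_add (-π), smul_inv_smul₀ two_pi_pos.ne',
    intervalIntegral.integral_comp_add_right (fun θ ↦ u (circleMap c r θ)),
    ← integral_Ioc_eq_integral_Ioo, intervalIntegral.integral_of_le (by linarith [pi_pos])]
  ring_nf

lemma setIntegral_ball_eq_setIntegral_circleMap (u : ℂ → E) (c : ℂ) (R : ℝ) :
    ∫ z in ball c R, u z =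
      ∫ p in Ioo 0 R ×ˢ Ioo (-π) π, p.1 • u (circleMap c p.1 p.2) := by
  have circleMap_mem_ball_iff {p : ℝ × ℝ} (hp : 0 < p.1) :
      circleMap c p.1 p.2 ∈ ball c R ↔ p.1 < R := by
    rw [mem_ball_iff_norm, circleMap_sub_center, norm_circleMap_zero, abs_of_pos hp]
  rw [← integral_indicator isOpen_ball.measurableSet, ← integral_add_left_eq_self _ c,
    ← Complex.integral_comp_polarCoord_symm,
    ← integral_indicator polarCoord.open_target.measurableSet,
    ← integral_indicator (measurableSet_Ioo.prod measurableSet_Ioo)]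
  congr 1 with p
  simp only [add_polarCoord_symm_eq_circleMap]
  by_cases hr : 0 < p.1
  · by_cases hR : p.1 < R <;>
      simp [indicator, polarCoord_target, circleMap_mem_ball_iff hr, hr, hR]
  · simp [indicator, polarCoord_target, hr]

theorem setIntegral_ball_eq_intervalIntegral_circleAverage {u : ℂ → E} (hu : Continuous u)
    (c : ℂ) {R : ℝ} (hR : 0 ≤ R) :
    ∫ z in ball c R, u z = ∫ r in 0..R, (2 * π * r) • circleAverage u c r := by
  have hcont : Continuous fun p : ℝ × ℝ ↦ p.1 • u (circleMap c p.1 p.2) := by fun_prop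
  have hint : IntegrableOn (fun p : ℝ × ℝ ↦ p.1 • u (circleMap c p.1 p.2))
      (Ioo 0 R ×ˢ Ioo (-π) π) (volume.prod volume) :=
    (hcont.continuousOn.integrableOn_compact (isCompact_Icc.prod isCompact_Icc)).mono_set
      (prod_mono Ioo_subset_Icc_self Ioo_subset_Icc_self)
  calc ∫ z in ball c R, u z
      = ∫ r in Ioo 0 R, ∫ θ in Ioo (-π) π, r • u (circleMap c r θ) := by
        rw [setIntegral_ball_eq_setIntegral_circleMap, Measure.volume_eq_prod,
          setIntegral_prod _ hint]
    _ = ∫ r in Ioo 0 R, (2 * π * r) • circleAverage u c r := by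
        simp only [integral_smul, setIntegral_circleMap_eq_smul_circleAverage, smul_smul,
          mul_comm]
    _ = ∫ r in 0..R, (2 * π * r) • circleAverage u c r := by
        rw [← integral_Ioc_eq_integral_Ioo, intervalIntegral.integral_of_le hR]

end PolarCoordinates

section Subharmonic

open Real Set Metric

/-- Continuous subharmonic functions on the plane, characterised by the sub-mean value inequality.
The inequality is required on every circle, not only on small ones, so that no maximum principle is
needed to apply it at large radii. -/
structure ContinuousSubharmonic (u : ℂ → ℝ) : Prop where
  continuous : Continuous u
  le_circleAverage (c : ℂ) {r : ℝ} (hr : 0 < r) : u c ≤ circleAverage u c r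

namespace ContinuousSubharmonic

variable {u : ℂ → ℝ}

theorem mul_pi_mul_sq_le_setIntegral_ball (hu : ContinuousSubharmonic u) (c : ℂ) {R : ℝ}
    (hR : 0 ≤ R) : u c * (π * R ^ 2) ≤ ∫ z in ball c R, u z := by
  calc u c * (π * R ^ 2) = ∫ r in 0..R, 2 * π * r * u c := by
        rw [intervalIntegral.integral_mul_const, intervalIntegral.integral_const_mul, integral_id]
        ring
    _ ≤ ∫ r in 0..R, (2 * π * r) • circleAverage u c r := by
        have hcont : Continuous (circleAverage u c) := hu.continuous.circleAverage
        refine intervalIntegral.integral_mono_on_of_le_Ioo hR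
          (Continuous.intervalIntegrable (by fun_prop) _ _)
          (Continuous.intervalIntegrable (by fun_prop) _ _) fun r hr ↦ ?_
        exact mul_le_mul_of_nonneg_left (hu.le_circleAverage c hr.1)
          (mul_nonneg two_pi_pos.le hr.1.le)
    _ = ∫ z in ball c R, u z :=
        (setIntegral_ball_eq_intervalIntegral_circleAverage hu.continuous c hR).symm

theorem mul_pi_mul_sq_le_mul_volume_support (hu : ContinuousSubharmonic u) {c : ℂ} {R B : ℝ}
    (hR : 0 ≤ R) (hB : ∀ z ∈ ball c R, u z ≤ B) :
    u c * (π * R ^ 2) ≤ B * volume.real (Function.support u ∩ ball c R) := by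
  have hint : IntegrableOn u (ball c R) :=
    (hu.continuous.continuousOn.integrableOn_compact (isCompact_closedBall c R)).mono_set
      ball_subset_closedBall
  have hmeas : MeasurableSet (Function.support u ∩ ball c R) :=
    hu.continuous.isOpen_support.measurableSet.inter measurableSet_ball
  have hfin : volume (Function.support u ∩ ball c R) ≠ ⊤ :=
    measure_ne_top_of_subset inter_subset_right measure_ball_lt_top.ne
  calc u c * (π * R ^ 2) ≤ ∫ z in ball c R, u z := hu.mul_pi_mul_sq_le_setIntegral_ball c hR
    _ = ∫ z in Function.support u ∩ ball c R, u z :=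
        setIntegral_eq_of_subset_of_forall_sdiff_eq_zero measurableSet_ball inter_subset_right
          fun z hz ↦ not_not.1 fun hne ↦ hz.2 ⟨hne, hz.1⟩
    _ ≤ ∫ _ in Function.support u ∩ ball c R, B :=
        setIntegral_mono_on (hint.mono_set inter_subset_right) (integrableOn_const hfin) hmeas
          fun z hz ↦ hB z hz.2
    _ = B * volume.real (Function.support u ∩ ball c R) := by
        rw [setIntegral_const, smul_eq_mul, mul_comm]

end ContinuousSubharmonic

end Subharmonic

section DiscMax

open Real Set Metric Asymptotics

variable {u : ℂ → ℝ} {z : ℂ} {R B : ℝ}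

/-- The maximum `B(R) = max_{|z| ≤ R} u(z)` of a continuous function over the closed disc of radius
`R` centred at the origin, through which the growth of `u` is measured. It is encoded as a supremum,
with the junk value `0` when `R < 0` or `u` is unbounded above on the disc. -/
noncomputable def discMax (u : ℂ → ℝ) (R : ℝ) : ℝ := sSup (u '' closedBall 0 R)

lemma le_discMax (hu : Continuous u) (hz : ‖z‖ ≤ R) : u z ≤ discMax u R :=
  le_csSup ((isCompact_closedBall 0 R).bddAbove_image hu.continuousOn)
    (mem_image_of_mem u (mem_closedBall_zero_iff.2 hz))

lemma discMax_le (hR : 0 ≤ R) (h : ∀ z, ‖z‖ ≤ R → u z ≤ B) : discMax u R ≤ B :=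
  csSup_le ((nonempty_closedBall.2 hR).image u) <|
    forall_mem_image.2 fun z hz ↦ h z (mem_closedBall_zero_iff.1 hz)

lemma discMax_nonneg (hu : ∀ z, 0 ≤ u z) (R : ℝ) : 0 ≤ discMax u R :=
  Real.sSup_nonneg <| forall_mem_image.2 fun z _ ↦ hu z

lemma discMax_isBigO_rpow (hu : ∀ z, 0 ≤ u z) {A B ρ : ℝ} (hρ : 0 ≤ ρ)
    (hgrowth : ∀ z, u z ≤ A + B * ‖z‖ ^ ρ) : discMax u =O[atTop] fun R ↦ R ^ ρ := by
  refine IsBigO.of_bound (|A| + |B|) ?_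
  filter_upwards [eventually_ge_atTop 1] with R hR
  have hR0 : 0 ≤ R := zero_le_one.trans hR
  have hRρ : 1 ≤ R ^ ρ := one_le_rpow hR hρ
  rw [norm_of_nonneg (discMax_nonneg hu R), norm_of_nonneg (rpow_nonneg hR0 ρ)]
  refine discMax_le hR0 fun z hz ↦ ?_
  calc u z ≤ A + B * ‖z‖ ^ ρ := hgrowth z
    _ ≤ |A| * R ^ ρ + |B| * R ^ ρ := by
        gcongr
        · exact (le_abs_self A).trans (le_mul_of_one_le_right (abs_nonneg A) hRρ)
        · exact le_abs_self B
    _ = (|A| + |B|) * R ^ ρ := by ring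

theorem ContinuousSubharmonic.discMax_le_mul_discMax_two_mul (hu : ContinuousSubharmonic u)
    (hu0 : ∀ z, 0 ≤ u z) {δ : ℝ} (hR : 0 < R)
    (hδ : volume.real (Function.support u ∩ ball 0 (2 * R)) ≤ δ * (2 * R) ^ 2) :
    discMax u R ≤ 4 * δ / π * discMax u (2 * R) := by
  refine discMax_le hR.le fun w hw ↦ ?_
  have hball : ball w R ⊆ ball 0 (2 * R) :=
    ball_subset_ball' (by rw [dist_zero_right]; linarith)
  have hvol : volume.real (Function.support u ∩ ball w R) ≤ δ * (2 * R) ^ 2 :=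
    (measureReal_mono (inter_subset_inter_right _ hball)
      (measure_ne_top_of_subset inter_subset_right measure_ball_lt_top.ne)).trans hδ
  have hmax : ∀ v ∈ ball w R, u v ≤ discMax u (2 * R) := fun v hv ↦
    le_discMax hu.continuous (mem_ball_zero_iff.1 (hball hv)).le
  refine le_of_mul_le_mul_right ?_ (show 0 < π * R ^ 2 by positivity)
  calc u w * (π * R ^ 2)
      ≤ discMax u (2 * R) * volume.real (Function.support u ∩ ball w R) :=
        hu.mul_pi_mul_sq_le_mul_volume_support hR.le hmax
    _ ≤ discMax u (2 * R) * (δ * (2 * R) ^ 2) :=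
        mul_le_mul_of_nonneg_left hvol (discMax_nonneg hu0 _)
    _ = 4 * δ / π * discMax u (2 * R) * (π * R ^ 2) := by field_simp; ring

end DiscMax

section Growth

open Real Set Metric Asymptotics

theorem eventually_eq_zero_of_le_mul_of_isBigO_rpow {m : ℝ → ℝ} {q l ρ : ℝ} (hm : ∀ R, 0 ≤ m R)
    (hq : 0 ≤ q) (hl : 1 ≤ l) (hql : q * l ^ ρ < 1)
    (hstep : ∀ᶠ R in atTop, m R ≤ q * m (l * R)) (hgrowth : m =O[atTop] fun R ↦ R ^ ρ) :
    ∀ᶠ R in atTop, m R = 0 := by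
  have hl0 : 0 ≤ l := zero_le_one.trans hl
  obtain ⟨C, hC⟩ := hgrowth.bound
  filter_upwards [eventually_forall_ge_atTop.2 hstep, eventually_forall_ge_atTop.2 hC,
    eventually_gt_atTop 0] with R hstep hC hR
  have hle (n : ℕ) : R ≤ l ^ n * R := le_mul_of_one_le_left hR.le (one_le_pow₀ hl)
  have hiter (n : ℕ) : m R ≤ q ^ n * m (l ^ n * R) := by
    induction n with
    | zero => simp
    | succ n ih =>
      calc m R ≤ q ^ n * m (l ^ n * R) := ih
        _ ≤ q ^ n * (q * m (l * (l ^ n * R))) := by gcongr; exact hstep _ (hle n)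
        _ = q ^ (n + 1) * m (l ^ (n + 1) * R) := by ring_nf
  have hbound (n : ℕ) : m R ≤ (q * l ^ ρ) ^ n * (C * R ^ ρ) := by
    calc m R ≤ q ^ n * m (l ^ n * R) := hiter n
      _ ≤ q ^ n * (C * (l ^ n * R) ^ ρ) := by
          have h := hC _ (hle n)
          rw [norm_of_nonneg (hm _), norm_of_nonneg (by positivity)] at h
          gcongr
      _ = (q * l ^ ρ) ^ n * (C * R ^ ρ) := by
          rw [mul_rpow (by positivity) hR.le, ← rpow_pow_comm hl0]
          ring
  have hlim : Tendsto (fun n : ℕ ↦ (q * l ^ ρ) ^ n * (C * R ^ ρ)) atTop (nhds 0) := by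
    simpa using (tendsto_pow_atTop_nhds_zero_of_lt_one (by positivity) hql).mul_const (C * R ^ ρ)
  exact le_antisymm (ge_of_tendsto' hlim hbound) (hm R)

theorem ContinuousSubharmonic.eq_zero_of_volume_support_le {u : ℂ → ℝ}
    (hu : ContinuousSubharmonic u) (hu0 : ∀ z, 0 ≤ u z) {A B ρ δ : ℝ} (hρ : 0 ≤ ρ)
    (hgrowth : ∀ z, u z ≤ A + B * ‖z‖ ^ ρ) (hδ : δ < π / 2 ^ (ρ + 2))
    (hdens : ∀ᶠ R in atTop, volume.real (Function.support u ∩ ball 0 R) ≤ δ * R ^ 2) (z : ℂ) :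
    u z = 0 := by
  have hδ0 : 0 ≤ δ := by
    obtain ⟨R, hR, hRpos⟩ := (hdens.and (eventually_gt_atTop 0)).exists
    exact nonneg_of_mul_nonneg_left (measureReal_nonneg.trans hR) (by positivity)
  have hcontract : 4 * δ / π * 2 ^ ρ < 1 := by
    rw [rpow_add two_pos, lt_div_iff₀ (by positivity)] at hδ
    rw [div_mul_eq_mul_div, div_lt_one pi_pos]
    norm_num at hδ
    linarith
  have hstep : ∀ᶠ R in atTop, discMax u R ≤ 4 * δ / π * discMax u (2 * R) := by
    filter_upwards [(tendsto_id.const_mul_atTop two_pos).eventually hdens, eventually_gt_atTop 0]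
      with R hR hRpos
    exact hu.discMax_le_mul_discMax_two_mul hu0 hRpos hR
  have hzero := eventually_eq_zero_of_le_mul_of_isBigO_rpow (discMax_nonneg hu0) (by positivity)
    one_le_two hcontract hstep (discMax_isBigO_rpow hu0 hρ hgrowth)
  obtain ⟨R, hR, hzR⟩ := (hzero.and (eventually_ge_atTop ‖z‖)).exists
  exact le_antisymm ((le_discMax hu.continuous hzR).trans_eq hR) (hu0 z)

end Growth

section PosLogNorm

open Real Set Metric

theorem log_norm_le_circleAverage_log_norm {f : ℂ → ℂ} {c : ℂ} {r : ℝ} (hr : 0 < r)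
    (hf : AnalyticOnNhd ℂ f (closedBall c r)) (hc : f c ≠ 0) :
    log ‖f c‖ ≤ circleAverage (log ‖f ·‖) c r := by
  rw [← abs_of_pos hr] at hf
  rw [hf.circleAverage_log_norm hr.ne' hc]
  refine le_add_of_nonneg_left (finsum_nonneg fun u ↦ ?_)
  by_cases hu : u ∈ closedBall c |r|
  · refine mul_nonneg (mod_cast MeromorphicOn.AnalyticOnNhd.divisor_nonneg hf u) ?_
    rw [mem_closedBall, dist_eq_norm', abs_of_pos hr] at hu
    rcases (norm_nonneg (c - u)).eq_or_lt with h | h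
    · simp [← h]
    · exact log_nonneg (by rwa [← div_eq_mul_inv, one_le_div h])
  · simp [hu]

theorem posLog_norm_le_circleAverage_posLog_norm {f : ℂ → ℂ} {c : ℂ} {r : ℝ} (hr : 0 < r)
    (hf : AnalyticOnNhd ℂ f (closedBall c r)) :
    log⁺ ‖f c‖ ≤ circleAverage (log⁺ ‖f ·‖) c r := by
  have hnonneg : 0 ≤ circleAverage (log⁺ ‖f ·‖) c r :=
    circleAverage_nonneg_of_nonneg fun _ _ ↦ posLog_nonneg
  by_cases hc : f c = 0
  · simpa [hc] using hnonneg
  have hmero : MeromorphicOn f (sphere c |r|) := fun z hz ↦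
    (hf z (sphere_subset_closedBall (abs_of_pos hr ▸ hz))).meromorphicAt
  exact max_le hnonneg <| (log_norm_le_circleAverage_log_norm hr hf hc).trans <|
    circleAverage_mono hmero.circleIntegrable_log_norm hmero.circleIntegrable_posLog_norm
      fun _ _ ↦ le_max_right _ _

variable {E : Type*} [NormedAddCommGroup E] [NormedSpace ℂ E] {f : ℂ → E}

theorem continuousSubharmonic_posLog_norm (hf : Differentiable ℂ f) :
    ContinuousSubharmonic fun z ↦ log⁺ ‖f z‖ where
  continuous := continuous_posLog.comp hf.continuous.norm
  le_circleAverage c r hr := by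
    obtain ⟨φ, hφ, hφc⟩ := exists_dual_vector'' ℂ (f c)
    have hφf : Differentiable ℂ fun z ↦ φ (f z) := φ.differentiable.comp hf
    have hle (z : ℂ) : ‖φ (f z)‖ ≤ ‖f z‖ := by simpa using φ.le_of_opNorm_le hφ (f z)
    calc log⁺ ‖f c‖ = log⁺ ‖φ (f c)‖ := by simp [hφc]
      _ ≤ circleAverage (fun z ↦ log⁺ ‖φ (f z)‖) c r :=
          posLog_norm_le_circleAverage_posLog_norm hr fun z _ ↦ hφf.analyticAt z
      _ ≤ circleAverage (log⁺ ‖f ·‖) c r :=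
          circleAverage_mono
            (continuous_posLog.comp hφf.continuous.norm).continuousOn.circleIntegrable'
            (continuous_posLog.comp hf.continuous.norm).continuousOn.circleIntegrable'
            fun z _ ↦ posLog_le_posLog (norm_nonneg _) (hle z)

lemma posLog_le_posLog_add_of_le_mul_exp {x C t : ℝ} (hx : 0 ≤ x) (ht : 0 ≤ t)
    (h : x ≤ C * exp t) : log⁺ x ≤ log⁺ C + t :=
  calc log⁺ x ≤ log⁺ (C * exp t) := posLog_le_posLog hx h
    _ ≤ log⁺ C + log⁺ (exp t) := posLog_mul
    _ = log⁺ C + t := by rw [posLog_apply (x := exp t), log_exp, max_eq_right ht]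

theorem norm_le_one_of_eventually_volume_le (hf : Differentiable ℂ f) {C ρ δ : ℝ} (hρ : 0 ≤ ρ)
    (hgrowth : ∀ z, ‖f z‖ ≤ C * exp (‖z‖ ^ ρ)) {Ω : Set ℂ} (hδ : δ < π / 2 ^ (ρ + 2))
    (hΩ : ∀ᶠ R in atTop, volume.real (Ω ∩ ball 0 R) ≤ δ * R ^ 2)
    (hone : ∀ z ∉ Ω, ‖f z‖ ≤ 1) (z : ℂ) : ‖f z‖ ≤ 1 := by
  have posLog_eq_zero_iff_le (w : ℂ) : log⁺ ‖f w‖ = 0 ↔ ‖f w‖ ≤ 1 := by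
    rw [posLog_eq_zero_iff, abs_norm]
  have hsupp : Function.support (fun w ↦ log⁺ ‖f w‖) ⊆ Ω := fun w hw ↦
    not_not.1 fun hwΩ ↦ hw ((posLog_eq_zero_iff_le w).2 (hone w hwΩ))
  have hdens : ∀ᶠ R in atTop,
      volume.real (Function.support (fun w ↦ log⁺ ‖f w‖) ∩ ball 0 R) ≤ δ * R ^ 2 := by
    filter_upwards [hΩ] with R hR
    exact (measureReal_mono (inter_subset_inter_left _ hsupp)
      (measure_ne_top_of_subset inter_subset_right measure_ball_lt_top.ne)).trans hR
  refine (posLog_eq_zero_iff_le z).1 <|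
    (continuousSubharmonic_posLog_norm hf).eq_zero_of_volume_support_le (A := log⁺ C) (B := 1)
      (fun _ ↦ posLog_nonneg) hρ (fun w ↦ ?_) hδ hdens z
  rw [one_mul]
  exact posLog_le_posLog_add_of_le_mul_exp (norm_nonneg _) (by positivity) (hgrowth w)

theorem stmt1_general (hf : Differentiable ℂ f) {C ρ δ : ℝ} (hρ : 0 ≤ ρ)
    (hgrowth : ∀ z, ‖f z‖ ≤ C * exp (‖z‖ ^ ρ)) {Ω : Set ℂ} (hδ : δ < π / 2 ^ (ρ + 2))
    (hΩ : ∀ᶠ R in atTop, (volume (Ω ∩ ball 0 R)).toReal / R ^ 2 ≤ δ)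
    {M : ℝ} (hM : ∀ z ∉ Ω, ‖f z‖ ≤ M) : ∃ c : E, ∀ z, f z = c := by
  set N : ℝ := max M 1
  have hN : 0 < N := lt_max_of_lt_right one_pos
  have hnorm (z : ℂ) : ‖(N⁻¹ : ℂ) • f z‖ = ‖f z‖ / N := by
    rw [norm_smul, norm_inv, Complex.norm_of_nonneg hN.le, inv_mul_eq_div]
  have hvol : ∀ᶠ R in atTop, volume.real (Ω ∩ ball 0 R) ≤ δ * R ^ 2 := by
    filter_upwards [hΩ, eventually_gt_atTop 0] with R hR hRpos
    exact (div_le_iff₀ (by positivity)).1 hR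
  have hscaled := norm_le_one_of_eventually_volume_le (hf.const_smul (N⁻¹ : ℂ)) hρ
    (fun z ↦ (hnorm z).trans_le <|
      (div_le_self (norm_nonneg _) (le_max_right _ _)).trans (hgrowth z)) hδ hvol
    (fun z hz ↦ (hnorm z).trans_le <| (div_le_one hN).2 <| (hM z hz).trans (le_max_left _ _))
  have hbdd : Bornology.IsBounded (range f) := by
    refine isBounded_iff_forall_norm_le.2 ⟨N, forall_mem_range.2 fun z ↦ ?_⟩
    exact (div_le_one hN).1 ((hnorm z).symm.trans_le (hscaled z))
  exact ⟨f 0, fun z ↦ hf.apply_eq_apply_of_bounded hbdd z 0⟩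

end PosLogNorm

/-- Let `f` be an entire function of finite order (|f(z)| ≤ C exp(|z|^ρ)).
If there exists a set `Ω ⊂ ℂ` of zero area density (m₂(Ω ∩ D(0,R))/R² → 0) such that `f`
is bounded on `ℂ \ Ω`, then `f` is constant. -/
theorem stmt1 (f : ℂ → ℂ) (hf : Differentiable ℂ f)
    (C ρ : ℝ) (hC : 0 < C) (hρ : 0 < ρ)
    (hgrowth : ∀ z : ℂ, ‖f z‖ ≤ C * Real.exp (‖z‖ ^ ρ))
    (Ω : Set ℂ)
    (hΩ : Tendsto (fun R : ℝ => (volume (Ω ∩ Metric.ball (0 : ℂ) R)).toReal / R ^ 2)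
      atTop (nhds 0))
    (M : ℝ) (hM : ∀ z ∉ Ω, ‖f z‖ ≤ M) :
    ∃ c : ℂ, ∀ z, f z = c := by
  have hδ : 0 < Real.pi / 2 ^ (ρ + 2) / 2 := by positivity
  exact stmt1_general hf hρ.le hgrowth (half_lt_self (by positivity))
    (hΩ.eventually_le_const hδ) hM
end

section
/- Let f be an entire function of finite order such that |f(z)| → 0 as |z| → ∞ with z outside a set Ω of zero area density. Then f is identically zero. -/
open MeasureTheory Filter

open Metric Real Set Topology

/-! Suppose `‖f‖ ≤ 1` off a set `E` that fills at most the fraction `q / 4` of every large disc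
about the origin, and let `u = log⁺ ‖f‖`, a continuous subharmonic function vanishing off `E`.
If `u ≤ K` on the disc of radius `2 * R` about the origin, then averaging `u` over discs of radius
`R` gives `u ≤ q * K` on the disc of radius `R`. Starting from radius `2 ^ n * R`, where finite
order bounds `u` by `O((2 ^ ρ) ^ n)`, `n` such steps gain the factor `q ^ n`; if `q * 2 ^ ρ < 1`,
letting `n` tend to infinity yields `u = 0`, that is `‖f‖ ≤ 1` everywhere. After scaling `f`, every
`ε > 0` that bounds `‖f‖` off `Ω` and far from the origin bounds `‖f‖` everywhere. -/

section PolarCoordinates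

variable {E : Type*} [NormedAddCommGroup E] [NormedSpace ℝ E]

theorem setIntegral_comp_circleMap_eq_circleAverage (f : ℂ → E) (c : ℂ) (r : ℝ) :
    ∫ θ in Ioo (-π) π, f (circleMap c r θ) = (2 * π) • circleAverage f c r := by
  rw [circleAverage_eq_integral_add (-π), smul_inv_smul₀ two_pi_pos.ne',
    intervalIntegral.integral_comp_add_right (fun θ ↦ f (circleMap c r θ)),
    show 0 + -π = -π by ring, show 2 * π + -π = π by ring,
    intervalIntegral.integral_of_le (by linarith [pi_pos]), integral_Ioc_eq_integral_Ioo]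

theorem setIntegral_ball_eq_setIntegral_comp_circleMap (f : ℂ → E) (c : ℂ) (R : ℝ) :
    ∫ z in ball c R, f z =
      ∫ p in Ioo 0 R ×ˢ Ioo (-π) π, p.1 • f (circleMap c p.1 p.2) := by
  have circleMap_eq (p : ℝ × ℝ) : c + Complex.polarCoord.symm p = circleMap c p.1 p.2 := by
    simp [circleMap, Complex.exp_mul_I]
  calc ∫ z in ball c R, f z
      = ∫ w, (ball c R).indicator f (c + w) := by
        rw [integral_add_left_eq_self, integral_indicator measurableSet_ball]
    _ = ∫ p in polarCoord.target, p.1 • (ball c R).indicator f (circleMap c p.1 p.2) := by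
        simp_rw [← circleMap_eq]
        exact (Complex.integral_comp_polarCoord_symm _).symm
    _ = ∫ p in polarCoord.target, (Ioo 0 R ×ˢ Ioo (-π) π).indicator
          (fun p ↦ p.1 • f (circleMap c p.1 p.2)) p := by
        refine setIntegral_congr_fun polarCoord.open_target.measurableSet fun p hp ↦ ?_
        have hp₁ : 0 < p.1 := hp.1
        have hp₂ : p.2 ∈ Ioo (-π) π := hp.2
        by_cases hpR : p.1 < R <;>
          simp [indicator, mem_ball, dist_eq_norm, circleMap, abs_of_pos, hp₁, hp₂.1, hp₂.2, hpR]
    _ = ∫ p in Ioo 0 R ×ˢ Ioo (-π) π, p.1 • f (circleMap c p.1 p.2) := by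
        rw [setIntegral_indicator (measurableSet_Ioo.prod measurableSet_Ioo), polarCoord_target,
          inter_eq_right.2 (prod_mono_left Ioo_subset_Ioi_self)]

theorem setIntegral_ball_eq_integral_circleAverage {f : ℂ → E} (hf : Continuous f) (c : ℂ)
    {R : ℝ} (hR : 0 ≤ R) :
    ∫ z in ball c R, f z = ∫ r in 0..R, (2 * π * r) • circleAverage f c r := by
  have hcont : Continuous fun p : ℝ × ℝ ↦ p.1 • f (circleMap c p.1 p.2) := by fun_prop
  have hint : IntegrableOn (fun p : ℝ × ℝ ↦ p.1 • f (circleMap c p.1 p.2))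
      (Ioo 0 R ×ˢ Ioo (-π) π) (volume.prod volume) :=
    (hcont.continuousOn.integrableOn_compact (isCompact_Icc.prod isCompact_Icc)).mono_set
      (prod_mono Ioo_subset_Icc_self Ioo_subset_Icc_self)
  rw [setIntegral_ball_eq_setIntegral_comp_circleMap, Measure.volume_eq_prod,
    setIntegral_prod _ hint, intervalIntegral.integral_of_le hR, integral_Ioc_eq_integral_Ioo]
  refine setIntegral_congr_fun measurableSet_Ioo fun r _ ↦ ?_
  simp only [integral_smul, setIntegral_comp_circleMap_eq_circleAverage, smul_smul]
  rw [mul_comm]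

end PolarCoordinates

/-- A continuous subharmonic function on the plane, characterised by the sub-mean value inequality
over circles. For `r ≤ 0` the inequality adds nothing, since `circleAverage u c` is even in the
radius and equals `u c` at radius `0`. -/
structure IsContSubharmonic (u : ℂ → ℝ) : Prop where
  continuous : Continuous u
  le_circleAverage (c : ℂ) (r : ℝ) : u c ≤ circleAverage u c r

section PosLog

theorem log_norm_le_circleAverage {g : ℂ → ℂ} {c : ℂ} {r : ℝ}
    (hg : AnalyticOnNhd ℂ g (closedBall c |r|)) (hc : g c ≠ 0) :
    log ‖g c‖ ≤ circleAverage (log ‖g ·‖) c r := by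
  rcases eq_or_ne r 0 with rfl | hr
  · rw [circleAverage_zero]
  rw [hg.circleAverage_log_norm hr hc]
  refine le_add_of_nonneg_left (finsum_nonneg fun w ↦ ?_)
  by_cases hw : w ∈ closedBall c |r|
  · refine mul_nonneg (mod_cast MeromorphicOn.AnalyticOnNhd.divisor_nonneg hg w) ?_
    rcases eq_or_ne c w with rfl | hcw
    · simp
    · rw [mem_closedBall', dist_eq_norm] at hw
      rw [← log_abs, abs_mul, abs_inv, abs_norm, ← div_eq_mul_inv]
      exact log_nonneg ((one_le_div (norm_pos_iff.2 (sub_ne_zero.2 hcw))).2 hw)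
  · simp [Function.locallyFinsuppWithin.apply_eq_zero_of_notMem _ hw]

theorem posLog_norm_le_circleAverage {g : ℂ → ℂ} {c : ℂ} {r : ℝ}
    (hg : AnalyticOnNhd ℂ g (closedBall c |r|)) :
    log⁺ ‖g c‖ ≤ circleAverage (log⁺ ‖g ·‖) c r := by
  have hnonneg : 0 ≤ circleAverage (log⁺ ‖g ·‖) c r :=
    circleAverage_nonneg_of_nonneg fun _ _ ↦ posLog_nonneg
  rcases eq_or_ne (g c) 0 with hc | hc
  · simpa [hc] using hnonneg
  have hmero : MeromorphicOn g (sphere c |r|) :=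
    fun z hz ↦ (hg z (sphere_subset_closedBall hz)).meromorphicAt
  exact max_le hnonneg <| (log_norm_le_circleAverage hg hc).trans <|
    circleAverage_mono hmero.circleIntegrable_log_norm hmero.circleIntegrable_posLog_norm
      fun _ _ ↦ le_max_right _ _

theorem posLog_norm_pos_iff {F : Type*} [SeminormedAddCommGroup F] {x : F} :
    0 < log⁺ ‖x‖ ↔ 1 < ‖x‖ := by
  rw [posLog_nonneg.lt_iff_ne', Ne, posLog_eq_zero_iff, abs_norm, not_le]

theorem posLog_mul_exp_le (a : ℝ) {t : ℝ} (ht : 0 ≤ t) : log⁺ (a * exp t) ≤ log⁺ a + t :=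
  calc log⁺ (a * exp t) ≤ log⁺ a + log⁺ (exp t) := posLog_mul
    _ = log⁺ a + t := by rw [posLog_apply (x := exp t), log_exp, max_eq_right ht]

variable {F : Type*} [NormedAddCommGroup F] [NormedSpace ℂ F]

theorem isContSubharmonic_posLog_norm {g : ℂ → F} (hg : Differentiable ℂ g) :
    IsContSubharmonic fun z ↦ log⁺ ‖g z‖ where
  continuous := continuous_posLog.comp hg.continuous.norm
  le_circleAverage c r := by
    -- A norming functional at `g c` reduces the inequality to scalar-valued functions.
    obtain ⟨φ, hφ, hφc⟩ := exists_dual_vector'' ℂ (g c)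
    have hφg : Differentiable ℂ fun z ↦ φ (g z) := φ.differentiable.comp hg
    have hle (z : ℂ) : ‖φ (g z)‖ ≤ ‖g z‖ := by simpa using φ.le_of_opNorm_le hφ (g z)
    calc log⁺ ‖g c‖ = log⁺ ‖φ (g c)‖ := by simp [hφc]
      _ ≤ circleAverage (fun z ↦ log⁺ ‖φ (g z)‖) c r :=
          posLog_norm_le_circleAverage fun z _ ↦ hφg.analyticAt z
      _ ≤ circleAverage (fun z ↦ log⁺ ‖g z‖) c r :=
          circleAverage_mono
            (continuous_posLog.comp hφg.continuous.norm).continuousOn.circleIntegrable'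
            (continuous_posLog.comp hg.continuous.norm).continuousOn.circleIntegrable'
            fun z _ ↦ posLog_le_posLog (norm_nonneg _) (hle z)

end PosLog

/-- The area of `Ω` inside the disc of radius `R` about the origin, divided by `R ^ 2`. Its limit
as `R → ∞` is the area density of `Ω`; the whole plane has ratio `π`. -/
noncomputable def areaRatio (Ω : Set ℂ) (R : ℝ) : ℝ :=
  volume.real (Ω ∩ ball 0 R) / R ^ 2

section AreaRatio

theorem areaRatio_nonneg (Ω : Set ℂ) (R : ℝ) : 0 ≤ areaRatio Ω R := by
  unfold areaRatio
  positivity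

theorem areaRatio_le_add_of_subset_union {E Ω B : Set ℂ} (hE : E ⊆ Ω ∪ B) (hB : volume B ≠ ⊤)
    (R : ℝ) : areaRatio E R ≤ areaRatio Ω R + volume.real B / R ^ 2 := by
  have hfin : volume (Ω ∩ ball (0 : ℂ) R) ≠ ⊤ :=
    measure_ne_top_of_subset inter_subset_right measure_ball_lt_top.ne
  have hsub : E ∩ ball 0 R ⊆ (Ω ∩ ball 0 R) ∪ B :=
    fun z hz ↦ (hE hz.1).imp (⟨·, hz.2⟩) id
  unfold areaRatio
  rw [← add_div]
  gcongr
  exact (measureReal_mono hsub (measure_union_ne_top hfin hB)).trans (measureReal_union_le _ _)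

theorem eventually_areaRatio_le_of_subset_union {E Ω B : Set ℂ} (hE : E ⊆ Ω ∪ B)
    (hB : volume B ≠ ⊤) {δ δ' : ℝ} (hδ : δ < δ') (hΩ : ∀ᶠ R in atTop, areaRatio Ω R ≤ δ) :
    ∀ᶠ R in atTop, areaRatio E R ≤ δ' := by
  have hlim : Tendsto (fun R : ℝ ↦ volume.real B / R ^ 2) atTop (𝓝 0) :=
    (tendsto_pow_atTop two_ne_zero).const_div_atTop _
  filter_upwards [hΩ, hlim.eventually_le_const (sub_pos.2 hδ)] with R hΩR hBR
  linarith [areaRatio_le_add_of_subset_union hE hB R]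

end AreaRatio

namespace IsContSubharmonic

variable {u : ℂ → ℝ} {K R : ℝ}

theorem mul_le_setIntegral_ball (hu : IsContSubharmonic u) (c : ℂ) (hR : 0 ≤ R) :
    π * R ^ 2 * u c ≤ ∫ z in ball c R, u z := by
  have hcont : Continuous (circleAverage u c) := hu.continuous.circleAverage
  calc π * R ^ 2 * u c = ∫ r in 0..R, 2 * π * r * u c := by
        rw [intervalIntegral.integral_mul_const, intervalIntegral.integral_const_mul, integral_id]
        ring
    _ ≤ ∫ r in 0..R, (2 * π * r) • circleAverage u c r := by
        refine intervalIntegral.integral_mono_on hR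
          (Continuous.intervalIntegrable (by fun_prop) _ _)
          (Continuous.intervalIntegrable (by fun_prop) _ _) fun r hr ↦ ?_
        exact mul_le_mul_of_nonneg_left (hu.le_circleAverage c r)
          (mul_nonneg two_pi_pos.le hr.1)
    _ = ∫ z in ball c R, u z := (setIntegral_ball_eq_integral_circleAverage hu.continuous c hR).symm

theorem mul_le_volume_pos_mul (hu : IsContSubharmonic u) {c : ℂ} (hR : 0 ≤ R)
    (hK : ∀ z ∈ ball c R, u z ≤ K) :
    π * R ^ 2 * u c ≤ volume.real ({z | 0 < u z} ∩ ball c R) * K := by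
  have hpos : MeasurableSet {z | 0 < u z} := measurableSet_lt measurable_const
    hu.continuous.measurable
  calc π * R ^ 2 * u c ≤ ∫ z in ball c R, u z := hu.mul_le_setIntegral_ball c hR
    _ ≤ ∫ z in ball c R, {z | 0 < u z}.indicator (fun _ ↦ K) z := by
        refine setIntegral_mono_on
          ((hu.continuous.continuousOn.integrableOn_compact (isCompact_closedBall c R)).mono_set
            ball_subset_closedBall)
          ((integrableOn_const measure_ball_lt_top.ne).indicator hpos)
          measurableSet_ball fun z hz ↦ ?_
        by_cases huz : 0 < u z
        · simpa [huz] using hK z hz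
        · simpa [huz] using not_lt.1 huz
    _ = volume.real ({z | 0 < u z} ∩ ball c R) * K := by
        rw [setIntegral_indicator hpos, setIntegral_const, smul_eq_mul, inter_comm]

theorem le_areaRatio_mul (hu : IsContSubharmonic u) (hK₀ : 0 ≤ K)
    (hK : ∀ z ∈ ball 0 (2 * R), u z ≤ K) {c : ℂ} (hc : c ∈ ball 0 R) :
    u c ≤ 4 / π * areaRatio {z | 0 < u z} (2 * R) * K := by
  have hR : 0 < R := pos_of_mem_ball hc
  have hball : ball c R ⊆ ball 0 (2 * R) := ball_subset_ball' (by linarith [mem_ball.1 hc])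
  have hvol : π * R ^ 2 * u c ≤ volume.real ({z | 0 < u z} ∩ ball 0 (2 * R)) * K := by
    refine (hu.mul_le_volume_pos_mul hR.le fun z hz ↦ hK z (hball hz)).trans ?_
    gcongr
    exact measure_ne_top_of_subset inter_subset_right measure_ball_lt_top.ne
  calc u c ≤ volume.real ({z | 0 < u z} ∩ ball 0 (2 * R)) * K / (π * R ^ 2) :=
        (le_div_iff₀' (by positivity)).2 hvol
    _ = 4 / π * areaRatio {z | 0 < u z} (2 * R) * K := by
        unfold areaRatio
        field_simp
        ring

theorem le_pow_mul {q : ℝ} (hu : IsContSubharmonic u)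
    (hq : ∀ S ≥ R, 4 / π * areaRatio {z | 0 < u z} S ≤ q) (hK₀ : 0 ≤ K) (n : ℕ)
    (hK : ∀ z ∈ ball 0 (2 ^ n * R), u z ≤ K) : ∀ z ∈ ball 0 R, u z ≤ q ^ n * K := by
  induction n generalizing R with
  | zero => simpa using hK
  | succ n ih =>
    intro z hz
    have hR : 0 < R := pos_of_mem_ball hz
    have hq₀ : 0 ≤ q :=
      (mul_nonneg (by positivity) (areaRatio_nonneg _ _)).trans (hq R le_rfl)
    have hstep : ∀ w ∈ ball 0 (2 * R), u w ≤ q ^ n * K :=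
      ih (fun S hS ↦ hq S (by linarith)) (by simpa only [pow_succ, mul_assoc] using hK)
    calc u z ≤ 4 / π * areaRatio {z | 0 < u z} (2 * R) * (q ^ n * K) :=
          hu.le_areaRatio_mul (by positivity) hstep hz
      _ ≤ q * (q ^ n * K) := by
          gcongr
          exact hq _ (by linarith)
      _ = q ^ (n + 1) * K := by ring

theorem le_pow_mul_add_of_growth (hu : IsContSubharmonic u) {A B ρ q : ℝ} (hA : 0 ≤ A)
    (hB : 0 ≤ B) (hρ : 0 ≤ ρ) (hgrowth : ∀ z, u z ≤ A + B * ‖z‖ ^ ρ)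
    (hq : ∀ S ≥ R, 4 / π * areaRatio {z | 0 < u z} S ≤ q) {z : ℂ} (hz : z ∈ ball 0 R) (n : ℕ) :
    u z ≤ q ^ n * A + B * R ^ ρ * (q * 2 ^ ρ) ^ n := by
  have hR : 0 < R := pos_of_mem_ball hz
  have hK : ∀ w ∈ ball 0 (2 ^ n * R), u w ≤ A + B * (2 ^ n * R) ^ ρ := fun w hw ↦ by
    refine (hgrowth w).trans ?_
    gcongr
    exact (mem_ball_zero_iff.1 hw).le
  calc u z ≤ q ^ n * (A + B * (2 ^ n * R) ^ ρ) :=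
        hu.le_pow_mul hq (by positivity) n hK z hz
    _ = q ^ n * A + B * R ^ ρ * (q * 2 ^ ρ) ^ n := by
        rw [mul_rpow (by positivity) hR.le, ← rpow_pow_comm zero_le_two]
        ring

theorem nonpos_of_areaRatio_le (hu : IsContSubharmonic u) {A B ρ δ : ℝ} (hA : 0 ≤ A)
    (hB : 0 ≤ B) (hρ : 0 ≤ ρ) (hgrowth : ∀ z, u z ≤ A + B * ‖z‖ ^ ρ) (hδ : δ < π / 2 ^ (ρ + 2))
    (hpos : ∀ᶠ R in atTop, areaRatio {z | 0 < u z} R ≤ δ) (z : ℂ) : u z ≤ 0 := by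
  obtain ⟨R, hR, hzR⟩ := ((eventually_forall_ge_atTop.2 hpos).and
    (eventually_gt_atTop ‖z‖)).exists
  set q := 4 / π * δ with hq
  have hareaRatio : ∀ S ≥ R, 4 / π * areaRatio {z | 0 < u z} S ≤ q := fun S hS ↦
    mul_le_mul_of_nonneg_left (hR S hS) (by positivity)
  have hq₀ : 0 ≤ q := mul_nonneg (by positivity) ((areaRatio_nonneg _ _).trans (hR R le_rfl))
  have hqρ : q * 2 ^ ρ < 1 := by
    rw [rpow_add two_pos, rpow_two, lt_div_iff₀ (by positivity)] at hδ
    rw [hq, div_mul_eq_mul_div, div_mul_eq_mul_div, div_lt_one pi_pos]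
    linarith
  have hq₁ : q < 1 :=
    (le_mul_of_one_le_right hq₀ (one_le_rpow one_le_two hρ)).trans_lt hqρ
  have hlim : Tendsto (fun n : ℕ ↦ q ^ n * A + B * R ^ ρ * (q * 2 ^ ρ) ^ n) atTop (𝓝 0) := by
    simpa using ((tendsto_pow_atTop_nhds_zero_of_lt_one hq₀ hq₁).mul_const A).add
      ((tendsto_pow_atTop_nhds_zero_of_lt_one (by positivity) hqρ).const_mul (B * R ^ ρ))
  exact ge_of_tendsto' hlim
    (hu.le_pow_mul_add_of_growth hA hB hρ hgrowth hareaRatio (mem_ball_zero_iff.2 hzR))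

end IsContSubharmonic

section Entire

variable {F : Type*} [NormedAddCommGroup F] [NormedSpace ℂ F] {f : ℂ → F} {C ρ δ r : ℝ}
  {Ω : Set ℂ}

theorem norm_le_one_of_areaRatio_le (hf : Differentiable ℂ f) (hρ : 0 ≤ ρ)
    (hgrowth : ∀ z, ‖f z‖ ≤ C * exp (‖z‖ ^ ρ)) (hδ : δ < π / 2 ^ (ρ + 2))
    (hΩ : ∀ᶠ R in atTop, areaRatio Ω R ≤ δ) (hbound : ∀ z ∉ Ω, r ≤ ‖z‖ → ‖f z‖ ≤ 1) (z : ℂ) :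
    ‖f z‖ ≤ 1 := by
  have hpos : {z | 0 < log⁺ ‖f z‖} ⊆ Ω ∪ ball 0 r := fun w hw ↦ by
    by_contra! h
    rw [mem_union, not_or, mem_ball_zero_iff, not_lt] at h
    exact (posLog_norm_pos_iff.1 hw).not_ge (hbound w h.1 h.2)
  have hlog (w : ℂ) : log⁺ ‖f w‖ ≤ log⁺ C + 1 * ‖w‖ ^ ρ := by
    rw [one_mul]
    exact (posLog_le_posLog (norm_nonneg _) (hgrowth w)).trans
      (posLog_mul_exp_le C (by positivity))
  obtain ⟨δ', hδδ', hδ'⟩ := exists_between hδ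
  have hnonpos := (isContSubharmonic_posLog_norm hf).nonpos_of_areaRatio_le posLog_nonneg
    zero_le_one hρ hlog hδ'
    (eventually_areaRatio_le_of_subset_union hpos measure_ball_lt_top.ne hδδ' hΩ) z
  exact not_lt.1 fun h ↦ hnonpos.not_gt (posLog_norm_pos_iff.2 h)

theorem norm_le_of_areaRatio_le (hf : Differentiable ℂ f) (hρ : 0 ≤ ρ)
    (hgrowth : ∀ z, ‖f z‖ ≤ C * exp (‖z‖ ^ ρ)) (hδ : δ < π / 2 ^ (ρ + 2))
    (hΩ : ∀ᶠ R in atTop, areaRatio Ω R ≤ δ) {M : ℝ} (hM : 0 < M)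
    (hbound : ∀ z ∉ Ω, r ≤ ‖z‖ → ‖f z‖ ≤ M) (z : ℂ) : ‖f z‖ ≤ M := by
  have hnorm (w : ℂ) : ‖(M⁻¹ : ℂ) • f w‖ = ‖f w‖ / M := by
    rw [norm_smul, norm_inv, Complex.norm_of_nonneg hM.le, inv_mul_eq_div]
  have hgrowth' (w : ℂ) : ‖(M⁻¹ : ℂ) • f w‖ ≤ C / M * exp (‖w‖ ^ ρ) := by
    rw [hnorm, div_mul_eq_mul_div]
    gcongr
    exact hgrowth w
  have hbound' : ∀ w ∉ Ω, r ≤ ‖w‖ → ‖(M⁻¹ : ℂ) • f w‖ ≤ 1 := fun w hw hrw ↦ by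
    rw [hnorm, div_le_one hM]
    exact hbound w hw hrw
  rw [← div_le_one hM, ← hnorm]
  exact norm_le_one_of_areaRatio_le (hf.const_smul _) hρ hgrowth' hδ hΩ hbound' z

theorem stmt2_general (hf : Differentiable ℂ f) (hρ : 0 ≤ ρ)
    (hgrowth : ∀ z, ‖f z‖ ≤ C * exp (‖z‖ ^ ρ)) (hδ : δ < π / 2 ^ (ρ + 2))
    (hΩ : ∀ᶠ R in atTop, areaRatio Ω R ≤ δ)
    (hdecay : ∀ ε > 0, ∃ R, ∀ z ∉ Ω, R ≤ ‖z‖ → ‖f z‖ ≤ ε) (z : ℂ) : f z = 0 := by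
  refine norm_le_zero_iff.1 (le_of_forall_gt_imp_ge_of_dense fun ε hε ↦ ?_)
  obtain ⟨R, hR⟩ := hdecay ε hε
  exact norm_le_of_areaRatio_le hf hρ hgrowth hδ hΩ hε hR z

end Entire

/-- Let `f` be an entire function of finite order such that `|f(z)| → 0`
as `|z| → ∞` with `z` outside a set `Ω` of zero area density. Then `f ≡ 0`. -/
theorem stmt2 (f : ℂ → ℂ) (hf : Differentiable ℂ f)
    (C ρ : ℝ) (hC : 0 < C) (hρ : 0 < ρ)
    (hgrowth : ∀ z : ℂ, ‖f z‖ ≤ C * Real.exp (‖z‖ ^ ρ))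
    (Ω : Set ℂ)
    (hΩ : Tendsto (fun R : ℝ => (volume (Ω ∩ Metric.ball (0 : ℂ) R)).toReal / R ^ 2)
      atTop (nhds 0))
    (hdecay : ∀ ε > (0 : ℝ), ∃ R : ℝ, ∀ z ∉ Ω, R ≤ ‖z‖ → ‖f z‖ ≤ ε) :
    ∀ z, f z = 0 := by
  obtain ⟨δ, hδ₀, hδ⟩ := exists_between (by positivity : 0 < π / 2 ^ (ρ + 2))
  exact stmt2_general hf hρ.le hgrowth hδ (hΩ.eventually_le_const hδ₀) hdecay
end

section
/- Let S be a function in the parametrizing class 𝒮, i.e., G(z)S(z) = A(z)Σₙ G(tₙ)c̄ₙ/(A'(tₙ)μₙ^{1/2}(z−tₙ)) for some (cₙ) ∈ ℓ², where G vanishes on Λ and G/A has the expansion G(z)/A(z) = (z−λ₀)Σₙ G(tₙ)/(A'(tₙ)(tₙ−λ₀)(z−tₙ)) for λ₀ ∈ Λ. Then for every w ∈ ℂ, the difference quotient (S(z) − S(w))/(z − w) also belongs to 𝒮. -/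
open Filter

/-- The parametrizing class `𝒮`: an entire function `S` belongs to `𝒮` if
`G(z)S(z) = A(z)Σₙ G(tₙ)c̄ₙ/(A'(tₙ)μₙ^{1/2}(z−tₙ))` for some `(cₙ) ∈ ℓ²`. -/
def InSClass (t : ℕ → ℂ) (μ : ℕ → ℝ) (A G : ℂ → ℂ) (S : ℂ → ℂ) : Prop :=
  Differentiable ℂ S ∧ ∃ c : ℕ → ℂ, Summable (fun n => ‖c n‖ ^ 2) ∧
    ∀ z ∉ Set.range t,
      G z * S z = A z * ∑' n, G (t n) * (starRingEnd ℂ) (c n) /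
        (deriv A (t n) * (Real.sqrt (μ n) : ℂ) * (z - t n))

/-!
Up to the factor `√μₙ`, the coefficients in the definition of `𝒮` are the conjugates of `S(tₙ)` at
the nodes where `G(tₙ) ≠ 0`: comparing residues at `tₙ` shows that `S ∈ 𝒮` exactly when `G S` is
the sum of its own Lagrange interpolation series at the nodes and `∑ μₙ |S(tₙ)|² < ∞` over the
nodes with `G(tₙ) ≠ 0`. The weighted condition passes to difference quotients because
`∑ μₙ / (|tₙ|² + 1) < ∞`.

For the interpolation condition, the expansion of `G / A` says that `E = G / (z - λ₀)` is the sum of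
its Lagrange series. For such `E`, the functions `f` for which `E f` is the sum of its Lagrange
series are closed under difference quotients, since those of `1 / (z - tₙ)` are multiples of it.
Applied to `(z - λ₀) S` at `λ₀`, and then to `S` at `w`, this covers `E S` and `E Q`, where `Q` is
the difference quotient of `S` at `w`; finally `G Q = E S - S(w) E + (w - λ₀) E Q`.
-/

open Asymptotics Bornology Topology

section CauchyTransform

variable {ι : Type*} {t x : ι → ℂ} {w z : ℂ}

/-- The Cauchy transform `z ↦ ∑ₙ xₙ / (z - tₙ)` of the discrete measure with mass `xₙ` at `tₙ`.
At `z = tₘ` the `m`-th term is `0`, so this is then the sum over the other points. -/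
noncomputable def cauchyTransform (t x : ι → ℂ) (z : ℂ) : ℂ := ∑' n, x n / (z - t n)

theorem isBigO_inv_sub_inv_sub (ht : Tendsto t cofinite (cobounded ℂ)) (z w : ℂ) :
    (fun n => (z - t n)⁻¹) =O[cofinite] fun n => (w - t n)⁻¹ := by
  have hdist : Tendsto (fun n => ‖z - t n‖) cofinite atTop :=
    tendsto_norm_cobounded_atTop.comp ((tendsto_const_sub_cobounded z).comp ht)
  have hsub : (fun n => w - t n) =O[cofinite] fun n => z - t n := by
    have hconst : (fun _ => w - z) =O[cofinite] fun n => z - t n :=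
      (isLittleO_const_left.2 (.inr hdist)).isBigO
    simpa only [sub_add_sub_cancel] using hconst.add (isBigO_refl (fun n => z - t n) cofinite)
  refine hsub.inv_rev ?_
  filter_upwards [ht.eventually_ne_cobounded w] with n hn h0
  exact absurd (sub_eq_zero.1 h0).symm hn

theorem isBigO_inv_sub_one (ht : Tendsto t cofinite (cobounded ℂ)) (z : ℂ) :
    (fun n => (z - t n)⁻¹) =O[cofinite] fun _ => (1 : ℂ) :=
  (tendsto_inv₀_cobounded.comp ((tendsto_const_sub_cobounded z).comp ht)).isBigO_one ℂ

theorem summable_div_sub (ht : Tendsto t cofinite (cobounded ℂ))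
    (hx : Summable fun n => x n / (w - t n)) (z : ℂ) : Summable fun n => x n / (z - t n) := by
  refine summable_of_isBigO hx.norm ?_
  simp only [div_eq_mul_inv]
  exact ((isBigO_refl x _).mul (isBigO_inv_sub_inv_sub ht z w)).norm_right

theorem exists_pos_forall_le_norm_sub (ht : Tendsto t cofinite (cobounded ℂ)) (w : ℂ) :
    ∃ r > 0, ∀ n, t n ≠ w → r ≤ ‖w - t n‖ := by
  have hfin : (t ⁻¹' Metric.closedBall w 1).Finite := by
    simpa using ht (isBounded_def.1 (Metric.isBounded_closedBall (x := w) (r := 1)))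
  have hnhds : (t '' (t ⁻¹' Metric.closedBall w 1) \ {w})ᶜ ∈ 𝓝 w :=
    ((hfin.image t).sdiff).isClosed.isOpen_compl.mem_nhds (by simp)
  obtain ⟨r, hr, hball⟩ := Metric.mem_nhds_iff.1 hnhds
  refine ⟨min r 1, lt_min hr one_pos, fun n hn => ?_⟩
  by_contra! hlt
  obtain ⟨hlt_r, hlt_one⟩ := lt_min_iff.1 hlt
  rw [← dist_eq_norm, dist_comm] at hlt_r hlt_one
  exact hball hlt_r ⟨⟨n, hlt_one.le, rfl⟩, hn⟩

theorem eventually_norm_sub_le_two_mul (ht : Tendsto t cofinite (cobounded ℂ)) (w : ℂ) :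
    ∀ᶠ z in 𝓝 w, ∀ n, t n ≠ w → ‖w - t n‖ ≤ 2 * ‖z - t n‖ := by
  obtain ⟨r, hr, hle⟩ := exists_pos_forall_le_norm_sub ht w
  filter_upwards [Metric.ball_mem_nhds w (half_pos hr)] with z hz n hn
  have hzw : ‖w - z‖ < r / 2 := by rwa [← dist_eq_norm, dist_comm]
  linarith [hle n hn, norm_sub_le_norm_sub_add_norm_sub w z (t n)]

theorem continuousAt_cauchyTransform (ht : Tendsto t cofinite (cobounded ℂ))
    (hx : Summable fun n => x n / (w - t n)) (hxw : ∀ n, t n = w → x n = 0) :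
    ContinuousAt (cauchyTransform t x) w := by
  refine tendsto_tsum_of_dominated_convergence (hx.norm.mul_left 2) (fun n => ?_) ?_
  · by_cases hn : t n = w
    · simp [hxw n hn]
    · exact ContinuousAt.div (by fun_prop) (by fun_prop) (sub_ne_zero.2 (Ne.symm hn))
  · filter_upwards [eventually_norm_sub_le_two_mul ht w] with z hz n
    by_cases hn : t n = w
    · simp [hxw n hn]
    have hw_pos : 0 < ‖w - t n‖ := norm_pos_iff.2 (sub_ne_zero.2 (Ne.symm hn))
    have hz_pos : 0 < ‖z - t n‖ := by linarith [hz n hn]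
    calc ‖x n / (z - t n)‖ = 2 * (‖x n‖ / (2 * ‖z - t n‖)) := by rw [norm_div]; field_simp
      _ ≤ 2 * (‖x n‖ / ‖w - t n‖) := by gcongr; exact hz n hn
      _ = 2 * ‖x n / (w - t n)‖ := by rw [norm_div]

theorem cauchyTransform_add_const_mul {y : ι → ℂ} (hx : Summable fun n => x n / (z - t n))
    (hy : Summable fun n => y n / (z - t n)) (c : ℂ) :
    cauchyTransform t (fun n => x n + c * y n) z =
      cauchyTransform t x z + c * cauchyTransform t y z := by
  simp only [cauchyTransform, add_div, mul_div_assoc]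
  rw [hx.tsum_add (hy.mul_left c), tsum_mul_left]

theorem summable_single_div_sub [DecidableEq ι] (m : ι) (z : ℂ) :
    Summable fun n => (Pi.single m 1 : ι → ℂ) n / (z - t n) :=
  (hasSum_single m fun n hn => by simp [hn]).summable

theorem cauchyTransform_single [DecidableEq ι] (m : ι) (z : ℂ) :
    cauchyTransform t (Pi.single m 1) z = (z - t m)⁻¹ := by
  rw [cauchyTransform, tsum_eq_single m fun n hn => by simp [hn], Pi.single_eq_same, one_div]

theorem tendsto_sub_mul_cauchyTransform (ht : Tendsto t cofinite (cobounded ℂ))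
    (htinj : t.Injective) (hx : ∀ z, Summable fun n => x n / (z - t n)) (m : ι) :
    Tendsto (fun z => (z - t m) * cauchyTransform t x z) (𝓝[≠] t m) (𝓝 (x m)) := by
  classical
  set y : ι → ℂ := fun n => x n + -x m * (Pi.single m 1 : ι → ℂ) n with hy
  have hym : ∀ n, t n = t m → y n = 0 := fun n hn => by simp [hy, htinj hn]
  have hys : Summable fun n => y n / (t m - t n) := by
    simpa only [hy, add_div, mul_div_assoc] using
      (hx (t m)).add ((summable_single_div_sub m (t m)).mul_left (-x m))
  have hcont : ContinuousAt (fun z => x m + (z - t m) * cauchyTransform t y z) (t m) :=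
    continuousAt_const.add
      ((by fun_prop : ContinuousAt (· - t m) (t m)).mul (continuousAt_cauchyTransform ht hys hym))
  have hlim := hcont.tendsto.mono_left (nhdsWithin_le_nhds (s := {t m}ᶜ))
  rw [sub_self, zero_mul, add_zero] at hlim
  refine hlim.congr' ?_
  filter_upwards [self_mem_nhdsWithin] with z hz
  have hz' : z - t m ≠ 0 := sub_ne_zero.2 hz
  rw [cauchyTransform_add_const_mul (hx z) (summable_single_div_sub m z), cauchyTransform_single]
  field_simp
  ring

theorem summable_div_sub_div_sub (ht : Tendsto t cofinite (cobounded ℂ))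
    (hx : Summable fun n => x n / (z - t n)) (w : ℂ) :
    Summable fun n => x n / (t n - w) / (z - t n) := by
  refine summable_of_isBigO hx.norm ?_
  have hinv : (fun n => (t n - w)⁻¹) =O[cofinite] fun _ => (1 : ℂ) := by
    simpa only [← neg_sub w, inv_neg] using (isBigO_inv_sub_one ht w).neg_left
  simpa only [div_eq_mul_inv, mul_right_comm, mul_one] using
    ((isBigO_refl (fun n => x n / (z - t n)) cofinite).mul hinv).norm_right

theorem cauchyTransform_sub_cauchyTransform (hx : ∀ z, Summable fun n => x n / (z - t n))
    (hxw : ∀ n, t n = w → x n = 0) (hz : z ∉ Set.range t) :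
    cauchyTransform t x z - cauchyTransform t x w =
      (z - w) * cauchyTransform t (fun n => x n / (t n - w)) z := by
  simp only [cauchyTransform]
  rw [← (hx z).tsum_sub (hx w), ← tsum_mul_left]
  refine tsum_congr fun n => ?_
  by_cases hn : t n = w
  · simp [hxw n hn]
  have hzn : z - t n ≠ 0 := fun h => hz ⟨n, (sub_eq_zero.1 h).symm⟩
  have hwn : w - t n ≠ 0 := sub_ne_zero.2 (Ne.symm hn)
  rw [← neg_sub w (t n), div_neg]
  field_simp
  ring

end CauchyTransform

theorem nhdsNE_le_codiscrete {X : Type*} [TopologicalSpace X] (p : X) :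
    𝓝[≠] p ≤ codiscrete X := fun _ hs => by
  simpa using mem_codiscreteWithin_iff_forall_mem_nhdsNE.1 hs p (Set.mem_univ p)

theorem eq_of_eventually_codiscrete_eq {X Y : Type*} [TopologicalSpace X] [TopologicalSpace Y]
    [T2Space Y] {f g : X → Y} {p : X} [(𝓝[≠] p).NeBot] (hf : ContinuousAt f p)
    (hg : ContinuousAt g p) (h : f =ᶠ[codiscrete X] g) : f p = g p :=
  ((hf.eventuallyEq_nhds_iff_eventuallyEq_nhdsNE hg).1
    (h.filter_mono (nhdsNE_le_codiscrete p))).eq_of_nhds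

theorem differentiable_dslope {f : ℂ → ℂ} (hf : Differentiable ℂ f) (w : ℂ) :
    Differentiable ℂ (dslope f w) :=
  differentiableOn_univ.1 ((Complex.differentiableOn_dslope univ_mem).2 hf.differentiableOn)

theorem dslope_sub_mul {f : ℂ → ℂ} (hf : Differentiable ℂ f) (a : ℂ) :
    dslope (fun z => (z - a) * f z) a = f := by
  funext z
  rcases eq_or_ne z a with rfl | hz
  · have hd : HasDerivAt (fun y => (y - z) * f y) (1 * f z + (z - z) * deriv f z) z :=
      ((hasDerivAt_id z).sub_const z).mul (hf z).hasDerivAt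
    rw [dslope_same, hd.deriv, sub_self, zero_mul, one_mul, add_zero]
  · exact dslope_sub_smul_of_ne f hz

/-- `t` enumerates, without repetition, simple zeros of the nonzero entire function `A`, and tends
to infinity. `A` may have further zeros, of any order. -/
structure IsSimpleZeroSequence {ι : Type*} (t : ι → ℂ) (A : ℂ → ℂ) : Prop where
  injective : t.Injective
  tendsto : Tendsto t cofinite (cobounded ℂ)
  differentiable : Differentiable ℂ A
  ne_zero : A ≠ 0
  apply_eq_zero : ∀ n, A (t n) = 0
  deriv_ne_zero : ∀ n, deriv A (t n) ≠ 0

/-- The residue `F(tₙ) / A'(tₙ)` of `F / A` at the simple zero `tₙ` of `A`. -/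
noncomputable def residueSeq {ι : Type*} (t : ι → ℂ) (A F : ℂ → ℂ) (n : ι) : ℂ :=
  F (t n) / deriv A (t n)

/-- `F` is the sum of its Lagrange interpolation series
`F(z) = A(z) ∑ₙ F(tₙ) / (A'(tₙ)(z - tₙ))` at the nodes `tₙ`. -/
structure IsLagrangeSum {ι : Type*} (t : ι → ℂ) (A F : ℂ → ℂ) : Prop where
  summable : ∀ z, Summable fun n => residueSeq t A F n / (z - t n)
  eq_mul : ∀ z ∉ Set.range t, F z = A z * cauchyTransform t (residueSeq t A F) z

section Lagrange

variable {ι : Type*} {t x : ι → ℂ} {A E F H f : ℂ → ℂ}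

theorem IsSimpleZeroSequence.eventually_ne_zero (hA : IsSimpleZeroSequence t A) :
    ∀ᶠ z in codiscrete ℂ, A z ≠ 0 := by
  obtain ⟨z, hz⟩ := Function.ne_iff.1 hA.ne_zero
  exact AnalyticOnNhd.preimage_zero_mem_codiscrete
    (fun z _ => hA.differentiable.analyticAt z) hz

theorem IsSimpleZeroSequence.notMem_range (hA : IsSimpleZeroSequence t A) {z : ℂ}
    (hz : A z ≠ 0) : z ∉ Set.range t := by
  rintro ⟨n, rfl⟩
  exact hz (hA.apply_eq_zero n)

theorem IsSimpleZeroSequence.eventually_notMem_range (hA : IsSimpleZeroSequence t A) :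
    ∀ᶠ z in codiscrete ℂ, z ∉ Set.range t :=
  hA.eventually_ne_zero.mono fun _ => hA.notMem_range

theorem IsSimpleZeroSequence.tendsto_div_sub (hA : IsSimpleZeroSequence t A) (m : ι) :
    Tendsto (fun z => A z / (z - t m)) (𝓝[≠] t m) (𝓝 (deriv A (t m))) := by
  refine (hasDerivAt_iff_tendsto_slope.1 (hA.differentiable (t m)).hasDerivAt).congr fun z => ?_
  rw [slope_def_field, hA.apply_eq_zero, sub_zero]

theorem residueSeq_eq_of_eventually_eq (hA : IsSimpleZeroSequence t A) (hF : Continuous F)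
    (hx : ∀ z, Summable fun n => x n / (z - t n))
    (hFx : ∀ᶠ z in codiscrete ℂ, F z = A z * cauchyTransform t x z) : residueSeq t A F = x := by
  funext m
  have hquot : Tendsto (fun z => F z / (A z / (z - t m))) (𝓝[≠] t m) (𝓝 (residueSeq t A F m)) :=
    (hF.continuousAt.tendsto.mono_left nhdsWithin_le_nhds).div (hA.tendsto_div_sub m)
      (hA.deriv_ne_zero m)
  refine tendsto_nhds_unique (hquot.congr' ?_)
    (tendsto_sub_mul_cauchyTransform hA.tendsto hA.injective hx m)
  filter_upwards [nhdsNE_le_codiscrete _ hFx, nhdsNE_le_codiscrete _ hA.eventually_ne_zero]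
    with z hz hAz
  rw [hz]
  field_simp

-- A divergent series has `tsum` equal to `0`, which leaves `F = 0`.
theorem summable_and_residueSeq_eq_or_eq_zero (hA : IsSimpleZeroSequence t A) (hF : Continuous F)
    (hFx : ∀ᶠ z in codiscrete ℂ, F z = A z * cauchyTransform t x z) :
    ((∀ z, Summable fun n => x n / (z - t n)) ∧ residueSeq t A F = x) ∨ F = 0 := by
  by_cases hx : Summable fun n => x n / (0 - t n)
  · have hx_all := summable_div_sub hA.tendsto hx
    exact .inl ⟨hx_all, residueSeq_eq_of_eventually_eq hA hF hx_all hFx⟩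
  · refine .inr (funext fun p => eq_of_eventually_codiscrete_eq hF.continuousAt
      continuousAt_const ?_)
    filter_upwards [hFx] with z hz
    have hdiv : ¬ Summable fun n => x n / (z - t n) := fun h => hx (summable_div_sub hA.tendsto h 0)
    rw [hz, cauchyTransform, tsum_eq_zero_of_not_summable hdiv, mul_zero, Pi.zero_apply]

theorem IsLagrangeSum.of_eventually_eq (hA : IsSimpleZeroSequence t A) (hF : Continuous F)
    (hFx : ∀ᶠ z in codiscrete ℂ, F z = A z * cauchyTransform t x z) : IsLagrangeSum t A F := by
  rcases summable_and_residueSeq_eq_or_eq_zero hA hF hFx with ⟨hx, rfl⟩ | rfl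
  · refine ⟨hx, fun z hz => eq_of_eventually_codiscrete_eq hF.continuousAt ?_ hFx⟩
    exact hA.differentiable.continuous.continuousAt.mul
      (continuousAt_cauchyTransform hA.tendsto (hx z) fun n hn => absurd ⟨n, hn⟩ hz)
  · constructor <;> simp [residueSeq, cauchyTransform, summable_zero]

theorem IsLagrangeSum.add_const_mul (hF : IsLagrangeSum t A F) (hH : IsLagrangeSum t A H) (c : ℂ) :
    IsLagrangeSum t A fun z => F z + c * H z := by
  have hres : (residueSeq t A fun z => F z + c * H z) =
      fun n => residueSeq t A F n + c * residueSeq t A H n :=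
    funext fun n => by simp only [residueSeq, add_div, mul_div_assoc]
  refine ⟨fun z => ?_, fun z hz => ?_⟩
  · simpa only [hres, add_div, mul_div_assoc] using
      (hF.summable z).add ((hH.summable z).mul_left c)
  · rw [hres, cauchyTransform_add_const_mul (hF.summable z) (hH.summable z), hF.eq_mul z hz,
      hH.eq_mul z hz]
    ring

-- Off the zeros of `A` the transform is `(E / A) f`, and `E / A`, being itself a transform, extends
-- continuously to `p` even if `A p = 0`.
theorem IsLagrangeSum.cauchyTransform_mul_eq_zero (hA : IsSimpleZeroSequence t A)
    (hE : IsLagrangeSum t A E) (hEf : IsLagrangeSum t A fun z => E z * f z) {p : ℂ}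
    (hp : p ∉ Set.range t) (hf : ContinuousAt f p) (hfp : f p = 0) :
    cauchyTransform t (residueSeq t A fun z => E z * f z) p = 0 := by
  have hcont {F : ℂ → ℂ} (hF : IsLagrangeSum t A F) :
      ContinuousAt (cauchyTransform t (residueSeq t A F)) p :=
    continuousAt_cauchyTransform hA.tendsto (hF.summable p) fun n hn => absurd ⟨n, hn⟩ hp
  suffices h : cauchyTransform t (residueSeq t A fun z => E z * f z) p =
      cauchyTransform t (residueSeq t A E) p * f p by rw [h, hfp, mul_zero]
  refine eq_of_eventually_codiscrete_eq (hcont hEf) ((hcont hE).mul hf) ?_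
  filter_upwards [hA.eventually_ne_zero] with z hz
  have hzt := hA.notMem_range hz
  refine mul_left_cancel₀ hz ?_
  rw [← hEf.eq_mul z hzt, Pi.mul_apply, ← mul_assoc, ← hE.eq_mul z hzt]

theorem IsLagrangeSum.div_sub_eq {p z : ℂ} (hF : IsLagrangeSum t A F) (hFp : F p = 0)
    (hzp : z ≠ p) (hzt : z ∉ Set.range t) :
    F z / (z - p) = A z * (cauchyTransform t (fun n => residueSeq t A F n / (t n - p)) z +
      cauchyTransform t (residueSeq t A F) p * (z - p)⁻¹) := by
  have hres : ∀ n, t n = p → residueSeq t A F n = 0 := fun n hn => by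
    rw [residueSeq, hn, hFp, zero_div]
  have hval := cauchyTransform_sub_cauchyTransform hF.summable hres hzt
  have hzp' : z - p ≠ 0 := sub_ne_zero.2 hzp
  rw [hF.eq_mul z hzt, eq_add_of_sub_eq hval]
  field_simp

-- The constant left over by `IsLagrangeSum.div_sub_eq` is the residue at `p` of the quotient if
-- `p` is a node, and vanishes otherwise.
theorem IsLagrangeSum.mul_dslope (hA : IsSimpleZeroSequence t A) (hE : IsLagrangeSum t A E)
    (hEc : Continuous E) (hf : Differentiable ℂ f) (hEf : IsLagrangeSum t A fun z => E z * f z)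
    (p : ℂ) : IsLagrangeSum t A fun z => E z * dslope f p z := by
  have hsub : IsLagrangeSum t A fun z => E z * (f z - f p) := by
    convert hEf.add_const_mul hE (-f p) using 2
    ring
  set x : ι → ℂ := residueSeq t A fun z => E z * (f z - f p)
  have hne : ∀ᶠ z in codiscrete ℂ, z ≠ p := (Set.finite_singleton p).compl_mem_codiscrete
  have hquot : ∀ᶠ z in codiscrete ℂ, E z * dslope f p z = A z *
      (cauchyTransform t (fun n => x n / (t n - p)) z + cauchyTransform t x p * (z - p)⁻¹) := by
    filter_upwards [hne, hA.eventually_notMem_range] with z hz hzt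
    rw [dslope_of_ne _ hz, slope_def_field, ← mul_div_assoc]
    exact hsub.div_sub_eq (by simp only [sub_self, mul_zero]) hz hzt
  have hcont : Continuous fun z => E z * dslope f p z :=
    hEc.mul (differentiable_dslope hf p).continuous
  by_cases hp : p ∈ Set.range t
  · classical
    obtain ⟨m, rfl⟩ := hp
    refine .of_eventually_eq hA hcont (hquot.mono fun z hz => ?_)
      (x := fun n => x n / (t n - t m) + cauchyTransform t x (t m) * (Pi.single m 1 : ι → ℂ) n)
    rw [hz, cauchyTransform_add_const_mul (summable_div_sub_div_sub hA.tendsto (hsub.summable z) _)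
      (summable_single_div_sub m z), cauchyTransform_single]
  · refine .of_eventually_eq hA hcont (hquot.mono fun z hz => ?_)
      (x := fun n => x n / (t n - p))
    have hval : cauchyTransform t x p = 0 := hE.cauchyTransform_mul_eq_zero hA hsub hp
      (hf.continuous.continuousAt.sub continuousAt_const) (sub_self _)
    rw [hz, hval, zero_mul, add_zero]

theorem isLagrangeSum_dslope_of_div_eq {G : ℂ → ℂ} {l : ℂ}
    (hA : IsSimpleZeroSequence t A) (hG : Differentiable ℂ G) (hGl : G l = 0)
    (hexp : ∀ z ∉ Set.range t, G z / A z =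
      (z - l) * ∑' n, G (t n) / (deriv A (t n) * (t n - l) * (z - t n))) :
    IsLagrangeSum t A (dslope G l) := by
  have hne : ∀ᶠ z in codiscrete ℂ, z ≠ l := (Set.finite_singleton l).compl_mem_codiscrete
  refine .of_eventually_eq hA (differentiable_dslope hG l).continuous
    (x := fun n => G (t n) / (deriv A (t n) * (t n - l))) ?_
  filter_upwards [hne, hA.eventually_ne_zero] with z hz hAz
  have hzl : z - l ≠ 0 := sub_ne_zero.2 hz
  simp only [cauchyTransform, div_div]
  rw [dslope_of_ne _ hz, slope_def_field, hGl, sub_zero, div_eq_iff hzl, mul_assoc,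
    mul_comm _ (z - l), ← hexp z (hA.notMem_range hAz), mul_div_cancel₀ _ hAz]

theorem IsLagrangeSum.mul_dslope_of_dslope {G S : ℂ → ℂ} {l : ℂ} (hA : IsSimpleZeroSequence t A)
    (hG : Differentiable ℂ G) (hS : Differentiable ℂ S) (hGl : G l = 0)
    (hGl_sum : IsLagrangeSum t A (dslope G l)) (hGS : IsLagrangeSum t A fun z => G z * S z)
    (w : ℂ) : IsLagrangeSum t A fun z => G z * dslope S w z := by
  have hEc : Continuous (dslope G l) := (differentiable_dslope hG l).continuous
  have hfactor : ∀ z, G z = (z - l) * dslope G l z := fun z =>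
    (sub_smul_dslope_of_zero hGl z).symm
  have hES : IsLagrangeSum t A fun z => dslope G l z * S z := by
    have hEf : IsLagrangeSum t A fun z => dslope G l z * ((z - l) * S z) := by
      convert hGS using 2 with z
      rw [hfactor z]
      ring
    simpa only [dslope_sub_mul hS] using hGl_sum.mul_dslope hA hEc (by fun_prop) hEf l
  have hE_dslope := hGl_sum.mul_dslope hA hEc hS hES w
  convert (hES.add_const_mul hGl_sum (-S w)).add_const_mul hE_dslope (w - l) using 2 with z
  have hSz : (z - w) * dslope S w z = S z - S w := sub_smul_dslope S w z
  rw [hfactor z]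
  linear_combination dslope G l z * hSz

end Lagrange

section Weight

variable {ι : Type*} {t : ι → ℂ} {μ : ι → ℝ}

theorem summable_mul_norm_sq_sub {a b : ι → ℂ} (hμ : ∀ n, 0 ≤ μ n)
    (ha : Summable fun n => μ n * ‖a n‖ ^ 2) (hb : Summable fun n => μ n * ‖b n‖ ^ 2) :
    Summable fun n => μ n * ‖a n - b n‖ ^ 2 := by
  refine .of_nonneg_of_le (fun n => mul_nonneg (hμ n) (sq_nonneg _)) (fun n => ?_)
    ((ha.add hb).mul_left 2)
  have hsq : ‖a n - b n‖ ^ 2 ≤ 2 * (‖a n‖ ^ 2 + ‖b n‖ ^ 2) :=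
    (pow_le_pow_left₀ (norm_nonneg _) (norm_sub_le _ _) 2).trans add_sq_le
  linarith [mul_le_mul_of_nonneg_left hsq (hμ n)]

theorem summable_mul_norm_sq_inv_sub (ht : Tendsto t cofinite (cobounded ℂ))
    (hμ : Summable fun n => μ n / (‖t n‖ ^ 2 + 1)) (w : ℂ) :
    Summable fun n => μ n * ‖(w - t n)⁻¹‖ ^ 2 := by
  have hinv_zero : (fun n => ‖(0 - t n)⁻¹‖ ^ 2) =O[cofinite] fun n => (‖t n‖ ^ 2 + 1)⁻¹ := by
    refine .of_bound 2 ?_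
    filter_upwards [(tendsto_norm_cobounded_atTop.comp ht).eventually_ge_atTop 1] with n hn
    have hsq : (1 : ℝ) ≤ ‖t n‖ ^ 2 := one_le_pow₀ hn
    rw [zero_sub, norm_inv, norm_neg, inv_pow, norm_inv, norm_inv,
      Real.norm_of_nonneg (by positivity), Real.norm_of_nonneg (by positivity),
      ← div_eq_mul_inv, inv_eq_one_div, div_le_div_iff₀ (by positivity) (by positivity)]
    linarith
  refine summable_of_isBigO hμ ?_
  simp only [div_eq_mul_inv]
  exact (isBigO_refl μ _).mul
    (((isBigO_inv_sub_inv_sub ht w 0).norm_norm.pow 2).trans hinv_zero)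

theorem summable_mul_norm_sq_dslope (ht : Tendsto t cofinite (cobounded ℂ)) (hμ : ∀ n, 0 ≤ μ n)
    (hμt : Summable fun n => μ n / (‖t n‖ ^ 2 + 1)) {S : ℂ → ℂ}
    (hS : Summable fun n => μ n * ‖S (t n)‖ ^ 2) (w : ℂ) :
    Summable fun n => μ n * ‖dslope S w (t n)‖ ^ 2 := by
  have hleft : Summable fun n => μ n * ‖S (t n) * (w - t n)⁻¹‖ ^ 2 := by
    refine summable_of_isBigO hS ((isBigO_refl μ _).mul (.pow ?_ 2))
    simpa only [mul_one] using
      ((isBigO_refl (fun n => S (t n)) cofinite).mul (isBigO_inv_sub_one ht w)).norm_norm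
  have hright : Summable fun n => μ n * ‖S w * (w - t n)⁻¹‖ ^ 2 := by
    simpa only [norm_mul, mul_pow, mul_left_comm] using
      (summable_mul_norm_sq_inv_sub ht hμt w).mul_left (‖S w‖ ^ 2)
  refine (summable_mul_norm_sq_sub hμ hleft hright).congr_cofinite ?_
  filter_upwards [ht.eventually_ne_cobounded w] with n hn
  rw [dslope_of_ne _ hn, slope_def_field, ← sub_mul, ← div_eq_mul_inv, norm_div, norm_div,
    norm_sub_rev w]

end Weight

section InSClass

variable {t : ℕ → ℂ} {μ : ℕ → ℝ} {A G S : ℂ → ℂ}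

theorem InSClass.isLagrangeSum_and_summable (hA : IsSimpleZeroSequence t A) (hμ : ∀ n, 0 < μ n)
    (hG : Continuous G) (hS : InSClass t μ A G S) :
    IsLagrangeSum t A (fun z => G z * S z) ∧
      Summable fun n : {n // G (t n) ≠ 0} => μ n * ‖S (t n)‖ ^ 2 := by
  obtain ⟨hSd, c, hc, hGS⟩ := hS
  have hGSc : Continuous fun z => G z * S z := hG.mul hSd.continuous
  set x : ℕ → ℂ := fun n => G (t n) * starRingEnd ℂ (c n) / (deriv A (t n) * (√(μ n) : ℂ)) with hx
  have hx_eq : ∀ᶠ z in codiscrete ℂ, G z * S z = A z * cauchyTransform t x z := by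
    filter_upwards [hA.eventually_notMem_range] with z hz
    simp only [hGS z hz, cauchyTransform, hx, div_div]
  refine ⟨.of_eventually_eq hA hGSc hx_eq, ?_⟩
  refine .of_nonneg_of_le (fun n => mul_nonneg (hμ n).le (sq_nonneg _)) (fun ⟨n, hn⟩ => ?_)
    (hc.subtype {n | G (t n) ≠ 0})
  rcases summable_and_residueSeq_eq_or_eq_zero hA hGSc hx_eq with ⟨-, hres⟩ | hzero
  · have hn_res := congrFun hres n
    have hμn : (√(μ n) : ℂ) ≠ 0 := Complex.ofReal_ne_zero.2 (Real.sqrt_pos.2 (hμ n)).ne'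
    have hAn := hA.deriv_ne_zero n
    have hcn : starRingEnd ℂ (c n) = √(μ n) * S (t n) := by
      simp only [residueSeq, hx] at hn_res
      field_simp at hn_res
      linear_combination -hn_res
    have hnorm : ‖c n‖ ^ 2 = μ n * ‖S (t n)‖ ^ 2 := by
      rw [← RCLike.norm_conj, hcn, norm_mul, mul_pow, Complex.norm_real,
        Real.norm_of_nonneg (Real.sqrt_nonneg _), Real.sq_sqrt (hμ n).le]
    exact hnorm.ge
  · have hSn : S (t n) = 0 := (mul_eq_zero.1 (congrFun hzero (t n))).resolve_left hn
    simp [hSn]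

theorem inSClass_of_isLagrangeSum (hμ : ∀ n, 0 < μ n) (hS : Differentiable ℂ S)
    (hGS : IsLagrangeSum t A fun z => G z * S z)
    (hsum : Summable fun n : {n // G (t n) ≠ 0} => μ n * ‖S (t n)‖ ^ 2) : InSClass t μ A G S := by
  set c : ℕ → ℂ :=
    {n | G (t n) ≠ 0}.indicator fun n => starRingEnd ℂ (√(μ n) * S (t n)) with hc
  have hc_sq : (fun n => ‖c n‖ ^ 2) =
      {n | G (t n) ≠ 0}.indicator fun n => μ n * ‖S (t n)‖ ^ 2 := by
    funext n
    by_cases hn : G (t n) = 0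
    · simp [hc, hn]
    · simp [hc, hn, mul_pow, Real.sq_sqrt (hμ n).le]
  have hGc : ∀ n, G (t n) * starRingEnd ℂ (c n) = √(μ n) * (G (t n) * S (t n)) := fun n => by
    by_cases hn : G (t n) = 0
    · simp [hn]
    · simp [hc, hn, mul_left_comm]
  refine ⟨hS, c, hc_sq ▸ summable_subtype_iff_indicator.1 hsum, fun z hz => ?_⟩
  rw [hGS.eq_mul z hz, cauchyTransform]
  congr 2 with n
  have hμn : (√(μ n) : ℂ) ≠ 0 := Complex.ofReal_ne_zero.2 (Real.sqrt_pos.2 (hμ n)).ne'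
  rw [hGc, mul_comm (deriv A _), mul_assoc, mul_div_mul_left _ _ hμn, residueSeq, div_div]

end InSClass

/-- Suppose `G` vanishes on `Λ` and `G/A` has the expansion
`G(z)/A(z) = (z−λ₀)Σₙ G(tₙ)/(A'(tₙ)(tₙ−λ₀)(z−tₙ))` for some `λ₀ ∈ Λ`. If `S ∈ 𝒮`,
then for every `w ∈ ℂ` the (entire extension of the) difference quotient
`(S(z) − S(w))/(z − w)` also belongs to `𝒮`. -/
theorem stmt17 (t : ℕ → ℂ) (htinj : Function.Injective t)
    (htinf : Tendsto (fun n => ‖t n‖) atTop atTop)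
    (μ : ℕ → ℝ) (hμpos : ∀ n, 0 < μ n)
    (hμsum : Summable (fun n => μ n / (‖t n‖ ^ 2 + 1)))
    (A : ℂ → ℂ) (hA : Differentiable ℂ A)
    (hAzero : ∀ n, A (t n) = 0) (hAsimple : ∀ n, deriv A (t n) ≠ 0)
    (Λ : Set ℂ) (hΛT : ∀ lam ∈ Λ, lam ∉ Set.range t)
    (G : ℂ → ℂ) (hGd : Differentiable ℂ G) (hGΛ : ∀ lam ∈ Λ, G lam = 0)
    (lam₀ : ℂ) (hlam₀ : lam₀ ∈ Λ)
    (hexp : ∀ z ∉ Set.range t,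
      G z / A z = (z - lam₀) *
        ∑' n, G (t n) / (deriv A (t n) * (t n - lam₀) * (z - t n)))
    (S : ℂ → ℂ) (hS : InSClass t μ A G S) :
    ∀ w : ℂ, ∃ Sw : ℂ → ℂ,
      (∀ z : ℂ, z ≠ w → Sw z = (S z - S w) / (z - w)) ∧ InSClass t μ A G Sw := by
  have ht : Tendsto t cofinite (cobounded ℂ) := by
    rwa [← tendsto_norm_atTop_iff_cobounded, Nat.cofinite_eq_atTop]
  have hA_zeros : IsSimpleZeroSequence t A :=
    ⟨htinj, ht, hA, fun h => hAsimple 0 (by simp [h]), hAzero, hAsimple⟩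
  have hG₀ : IsLagrangeSum t A (dslope G lam₀) :=
    isLagrangeSum_dslope_of_div_eq hA_zeros hGd (hGΛ lam₀ hlam₀) hexp
  obtain ⟨hGS, hS_sum⟩ := hS.isLagrangeSum_and_summable hA_zeros hμpos hGd.continuous
  intro w
  refine ⟨dslope S w, fun z hz => by rw [dslope_of_ne _ hz, slope_def_field], ?_⟩
  refine inSClass_of_isLagrangeSum hμpos (differentiable_dslope hS.1 w) ?_ ?_
  · exact .mul_dslope_of_dslope hA_zeros hGd hS.1 (hGΛ lam₀ hlam₀) hG₀ hGS w
  · exact summable_mul_norm_sq_dslope (t := fun n : {n // G (t n) ≠ 0} => t n)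
      (ht.comp Subtype.val_injective.tendsto_cofinite) (fun n => (hμpos n).le)
      (hμsum.subtype {n | G (t n) ≠ 0}) hS_sum w
end

section
/- Let f be analytic in the upper half-plane ℂ⁺ and given by a convergent Cauchy series f(z) = Σₙ cₙ/(tₙ − z) with all poles tₙ in the closed lower half-plane and Σₙ |cₙ|/|tₙ| < ∞. Then f belongs to the Smirnov class in ℂ⁺. In particular, if cₙ > 0 for all n then Im f > 0 on ℂ⁺. -/
open MeasureTheory Complex

/-- The open upper half-plane. -/
def UHP : Set ℂ := {z : ℂ | 0 < z.im}

/-- `h` is a bounded analytic function on the upper half-plane. -/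
def BoundedAnalyticUHP (h : ℂ → ℂ) : Prop :=
  DifferentiableOn ℂ h UHP ∧ ∃ M : ℝ, ∀ z ∈ UHP, ‖h z‖ ≤ M

/-- `h` (bounded analytic on `ℂ⁺`) is outer: it is zero-free on `ℂ⁺` and `log|h|` is
the Poisson integral of an integrable boundary function `u`. -/
def IsOuterUHP (h : ℂ → ℂ) : Prop :=
  (∀ z ∈ UHP, h z ≠ 0) ∧
  ∃ u : ℝ → ℝ,
    (∀ z ∈ UHP, Integrable (fun s : ℝ =>
      (z.im / ((z.re - s) ^ 2 + z.im ^ 2)) * u s)) ∧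
    ∀ z ∈ UHP, Real.log ‖h z‖ =
      (1 / Real.pi) * ∫ s : ℝ, (z.im / ((z.re - s) ^ 2 + z.im ^ 2)) * u s

/-- `f` belongs to the Smirnov class in `ℂ⁺`: `f = g/h` with `g, h` bounded analytic
in `ℂ⁺` and `h` outer. -/
def SmirnovUHP (f : ℂ → ℂ) : Prop :=
  ∃ g h : ℂ → ℂ, BoundedAnalyticUHP g ∧ BoundedAnalyticUHP h ∧ IsOuterUHP h ∧
    ∀ z ∈ UHP, f z = g z / h z

/-!
A function `F` with `Im F ≥ 0` is the quotient of `F / (F + i)` and `1 / (F + i)`, both bounded, so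
it is Smirnov as soon as `1 / (F + i)` is outer. This holds because its logarithm `Q` has bounded
imaginary part: transported to the disc by the Cayley transform, the mean value property of `Q ^ 2`
bounds the `L²` means of `Re Q` on circles, and a weak `L²` limit of these restrictions is a
boundary function whose Poisson integral is `Re Q`. A Cauchy series is a linear combination of four
series with nonnegative coefficients, each of which has nonnegative imaginary part.
-/

open Filter InnerProductSpace Metric Set Topology
open scoped Real

section WeakLimit

theorem exists_tendsto_inner_of_norm_le {𝕜 E ι : Type*} [RCLike 𝕜] [NormedAddCommGroup E]
    [InnerProductSpace 𝕜 E] [CompleteSpace E] (l : Ultrafilter ι) {v : ι → E} {M : ℝ}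
    (hv : ∀ i, ‖v i‖ ≤ M) :
    ∃ w : E, ∀ φ : E, Tendsto (fun i => inner 𝕜 (v i) φ) l (𝓝 (inner 𝕜 w φ)) := by
  let D := toDual 𝕜 E
  let L : ι → WeakDual 𝕜 E := fun i => StrongDual.toWeakDual (D (v i))
  have hL : ∀ i, L i ∈ WeakDual.toStrongDual ⁻¹' closedBall (0 : StrongDual 𝕜 E) M := fun i => by
    simpa [L, D] using hv i
  obtain ⟨x, -, hx⟩ := (WeakDual.isCompact_closedBall (0 : StrongDual 𝕜 E) M).ultrafilter_le_nhds
    (l.map L) (le_principal_iff.2 (Filter.mem_map.2 (univ_mem' hL)))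
  refine ⟨D.symm (WeakDual.toStrongDual x), fun φ => ?_⟩
  rw [toDual_symm_apply]
  exact ((WeakDual.eval_continuous φ).tendsto x).comp hx

theorem inner_toLp_toLp {α : Type*} [MeasurableSpace α] {μ : Measure α} {f g : α → ℝ}
    (hf : MemLp f 2 μ) (hg : MemLp g 2 μ) :
    inner ℝ (hf.toLp f) (hg.toLp g) = ∫ x, g x * f x ∂μ := by
  rw [L2.inner_def]
  refine integral_congr_ae ?_
  filter_upwards [hf.coeFn_toLp, hg.coeFn_toLp] with x hfx hgx
  simp [hfx, hgx]

theorem exists_memLp_tendsto_integral_mul {α ι : Type*} [MeasurableSpace α] {μ : Measure α}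
    (l : Ultrafilter ι) {v : ι → α → ℝ} {M : ℝ} (hv : ∀ i, MemLp (v i) 2 μ)
    (hM : ∀ i, ∫ x, v i x ^ 2 ∂μ ≤ M) :
    ∃ u : α → ℝ, MemLp u 2 μ ∧ ∀ φ : α → ℝ, MemLp φ 2 μ →
      Tendsto (fun i => ∫ x, φ x * v i x ∂μ) l (𝓝 (∫ x, φ x * u x ∂μ)) := by
  have hnorm : ∀ i, ‖(hv i).toLp (v i)‖ ≤ √M := fun i => by
    refine Real.le_sqrt_of_sq_le ?_
    rw [← real_inner_self_eq_norm_sq, inner_toLp_toLp]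
    simpa only [pow_two] using hM i
  obtain ⟨w, hw⟩ := exists_tendsto_inner_of_norm_le (𝕜 := ℝ) l hnorm
  refine ⟨w, Lp.memLp w, fun φ hφ => ?_⟩
  have hlim := hw (hφ.toLp φ)
  rw [← Lp.toLp_coeFn w (Lp.memLp w)] at hlim
  simpa only [inner_toLp_toLp] using hlim

end WeakLimit

section Disc

theorem memLp_two_restrict_Ioo_of_continuous {g : ℝ → ℝ} (hg : Continuous g) (a b : ℝ) :
    MemLp g 2 (volume.restrict (Ioo a b)) :=
  (memLp_two_iff_integrable_sq hg.aestronglyMeasurable).2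
    ((hg.pow 2).integrableOn_Icc.mono_set Ioo_subset_Icc_self)

theorem circleAverage_eq_setIntegral_Ioo (f : ℂ → ℝ) (c : ℂ) (R : ℝ) :
    Real.circleAverage f c R = (2 * π)⁻¹ * ∫ θ in Ioo 0 (2 * π), f (circleMap c R θ) := by
  rw [Real.circleAverage_def, intervalIntegral.integral_of_le Real.two_pi_pos.le,
    integral_Ioc_eq_integral_Ioo, smul_eq_mul]

theorem poissonKernel_dilation (c w z : ℂ) {ρ : ℝ} (hρ : ρ ≠ 0) :
    poissonKernel c (c + ρ * (w - c)) (c + ρ * (z - c)) = poissonKernel c w z := by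
  simp only [poissonKernel_def, add_sub_cancel_left, ← mul_sub, norm_mul, mul_pow]
  exact mul_div_mul_left _ _ (by simpa using hρ)

theorem continuous_poissonKernel_circleMap {c w : ℂ} {R : ℝ} (hw : w ∈ ball c R) :
    Continuous fun θ : ℝ => poissonKernel c w (circleMap c R θ) := by
  have hne : ∀ θ : ℝ, circleMap c R θ - c - (w - c) ≠ 0 := fun θ h =>
    (circleMap_ne_mem_ball hw θ) (sub_left_injective (sub_eq_zero.1 h))
  simp only [poissonKernel_def]
  exact Continuous.div (by fun_prop) (by fun_prop) fun θ => by simpa using hne θ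

theorem eq_setIntegral_poissonKernel_dilation {h : ℂ → ℝ} {c w : ℂ} {R ρ : ℝ}
    (hh : HarmonicOnNhd h (closedBall c (ρ * R))) (hρ : 0 < ρ) (hw : w ∈ ball c R) :
    h (c + ρ * (w - c)) = (2 * π)⁻¹ * ∫ θ in Ioo 0 (2 * π),
      poissonKernel c w (circleMap c R θ) * h (circleMap c (ρ * R) θ) := by
  have hmem : c + ρ * (w - c) ∈ ball c (ρ * R) := by
    rw [mem_ball_iff_norm, add_sub_cancel_left, norm_mul, norm_real, Real.norm_of_nonneg hρ.le]
    exact mul_lt_mul_of_pos_left (mem_ball_iff_norm.1 hw) hρ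
  have hcircle : ∀ θ, circleMap c (ρ * R) θ = c + ρ * (circleMap c R θ - c) := fun θ => by
    simp [circleMap, mul_assoc]
  rw [← hh.circleAverage_poissonKernel_smul hmem, circleAverage_eq_setIntegral_Ioo]
  simp only [Pi.smul_apply', smul_eq_mul, hcircle, poissonKernel_dilation c w _ hρ.ne']

/-- `u` is a weak `L²` limit of the dilations `z ↦ h (c + ρ (z - c))` as `ρ → 1`. -/
theorem exists_memLp_eq_poissonIntegral {h : ℂ → ℝ} {c : ℂ} {R M : ℝ}
    (hh : HarmonicOnNhd h (ball c R)) (hR : 0 < R)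
    (hM : ∀ r ∈ Ioo 0 R, Real.circleAverage (fun z => h z ^ 2) c r ≤ M) :
    ∃ u : ℝ → ℝ, MemLp u 2 (volume.restrict (Ioo 0 (2 * π))) ∧ ∀ w ∈ ball c R,
      h w = (2 * π)⁻¹ * ∫ θ in Ioo 0 (2 * π), poissonKernel c w (circleMap c R θ) * u θ := by
  obtain ⟨ρ, -, hρ, hρ_lim⟩ := exists_seq_strictMono_tendsto' (zero_lt_one (α := ℝ))
  have hr : ∀ n, ρ n * R ∈ Ioo 0 R := fun n =>
    ⟨mul_pos (hρ n).1 hR, mul_lt_of_lt_one_left hR (hρ n).2⟩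
  have hclosed : ∀ n, closedBall c (ρ n * R) ⊆ ball c R := fun n =>
    closedBall_subset_ball (hr n).2
  have hv : ∀ n, MemLp (fun θ => h (circleMap c (ρ n * R) θ)) 2
      (volume.restrict (Ioo 0 (2 * π))) := fun n =>
    memLp_two_restrict_Ioo_of_continuous (hh.continuousOn.comp_continuous
      (continuous_circleMap _ _) fun θ => hclosed n (circleMap_mem_closedBall c (hr n).1.le θ)) _ _
  have hv_sq : ∀ n, ∫ θ in Ioo 0 (2 * π), h (circleMap c (ρ n * R) θ) ^ 2 ≤ 2 * π * M := fun n => by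
    have := hM _ (hr n)
    rwa [circleAverage_eq_setIntegral_Ioo, inv_mul_le_iff₀ Real.two_pi_pos] at this
  obtain ⟨u, hu, hu_lim⟩ := exists_memLp_tendsto_integral_mul (hyperfilter ℕ) hv hv_sq
  refine ⟨u, hu, fun w hw => ?_⟩
  have hw_lim : Tendsto (fun n => c + ρ n * (w - c)) atTop (𝓝 w) := by
    simpa using (((continuous_ofReal.tendsto 1).comp hρ_lim).mul_const (w - c)).const_add c
  have hh_lim : Tendsto (fun n => h (c + ρ n * (w - c))) (hyperfilter ℕ) (𝓝 (h w)) :=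
    ((hh.continuousOn.continuousAt (isOpen_ball.mem_nhds hw)).tendsto.comp hw_lim).mono_left
      Nat.hyperfilter_le_atTop
  simp only [fun n => eq_setIntegral_poissonKernel_dilation (hh.mono (hclosed n)) (hρ n).1 hw]
    at hh_lim
  exact tendsto_nhds_unique hh_lim ((hu_lim _ (memLp_two_restrict_Ioo_of_continuous
    (continuous_poissonKernel_circleMap hw) _ _)).const_mul _)

/-- `(Re f) ^ 2 = Re (f ^ 2) + (Im f) ^ 2`, and `Re (f ^ 2)` has the mean value property. -/
theorem circleAverage_re_sq_le {f : ℂ → ℂ} {c : ℂ} {R B : ℝ} (hf : DiffContOnCl ℂ f (ball c |R|))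
    (hB : ∀ z ∈ sphere c |R|, |(f z).im| ≤ B) :
    Real.circleAverage (fun z => (f z).re ^ 2) c R ≤ (f c).re ^ 2 + B ^ 2 := by
  let g : ℂ → ℂ := fun z => f z * f z + ((B ^ 2 : ℝ) : ℂ)
  have hg : DiffContOnCl ℂ g (ball c |R|) := (hf.smul hf).add_const _
  have hg_re : ∀ z, (g z).re = (f z).re ^ 2 - (f z).im ^ 2 + B ^ 2 := fun z => by
    simp [g, pow_two]
  have hcont : ∀ {k : ℂ → ℂ}, DiffContOnCl ℂ k (ball c |R|) → ContinuousOn k (sphere c |R|) :=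
    fun hk => hk.continuousOn_ball.mono sphere_subset_closedBall
  calc Real.circleAverage (fun z => (f z).re ^ 2) c R
      ≤ Real.circleAverage (reCLM ∘ g) c R := by
        refine Real.circleAverage_mono
          ((continuous_re.comp_continuousOn (hcont hf)).pow 2).circleIntegrable'
          (continuous_re.comp_continuousOn (hcont hg)).circleIntegrable' fun z hz => ?_
        have := sq_le_sq' (neg_le_of_abs_le (hB z hz)) (le_of_abs_le (hB z hz))
        simp only [Function.comp_apply, reCLM_apply, hg_re]
        linarith
    _ = (g c).re := by
        rw [reCLM.circleAverage_comp_comm (hcont hg).circleIntegrable', hg.circleAverage,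
          reCLM_apply]
    _ ≤ (f c).re ^ 2 + B ^ 2 := by
        rw [hg_re]
        linarith [sq_nonneg (f c).im]

end Disc

section ChangeOfVariables

/-- The argument in `(0, 2π)` of the boundary value `(s - i) / (s + i)` of the Cayley transform,
used to parametrize the unit circle minus `1` by the real line. -/
noncomputable def cayleyAngle (s : ℝ) : ℝ := π + 2 * Real.arctan s

theorem hasDerivAt_cayleyAngle (s : ℝ) : HasDerivAt cayleyAngle (2 / (1 + s ^ 2)) s := by
  rw [← mul_one_div]
  exact ((Real.hasDerivAt_arctan s).const_mul 2).const_add π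

theorem monotone_cayleyAngle : Monotone cayleyAngle :=
  (Real.arctan_strictMono.monotone.const_mul zero_le_two).const_add π

theorem image_univ_cayleyAngle : cayleyAngle '' univ = Ioo 0 (2 * π) := by
  ext θ
  simp only [image_univ, mem_range, cayleyAngle, mem_Ioo]
  constructor
  · rintro ⟨s, rfl⟩
    constructor <;> linarith [Real.neg_pi_div_two_lt_arctan s, Real.arctan_lt_pi_div_two s]
  · rintro ⟨h₀, h₁⟩
    refine ⟨Real.tan ((θ - π) / 2), ?_⟩
    rw [Real.arctan_tan (by linarith) (by linarith)]
    ring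

variable {F : Type*} [NormedAddCommGroup F] [NormedSpace ℝ F] (g : ℝ → F)

theorem integrableOn_Ioo_iff_integrable_comp_cayleyAngle :
    IntegrableOn g (Ioo 0 (2 * π)) ↔
      Integrable fun s => (2 / (1 + s ^ 2)) • g (cayleyAngle s) := by
  rw [← image_univ_cayleyAngle, integrableOn_image_iff_integrableOn_deriv_smul_of_monotoneOn
    .univ (fun s _ => (hasDerivAt_cayleyAngle s).hasDerivWithinAt)
    (monotone_cayleyAngle.monotoneOn _), integrableOn_univ]

theorem setIntegral_Ioo_eq_integral_comp_cayleyAngle :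
    ∫ θ in Ioo 0 (2 * π), g θ = ∫ s, (2 / (1 + s ^ 2)) • g (cayleyAngle s) := by
  rw [← image_univ_cayleyAngle, integral_image_eq_integral_deriv_smul_of_monotoneOn
    .univ (fun s _ => (hasDerivAt_cayleyAngle s).hasDerivWithinAt)
    (monotone_cayleyAngle.monotoneOn _), setIntegral_univ]

end ChangeOfVariables

section Cayley

/-- The Cayley transform, mapping the upper half-plane onto the unit disc. -/
noncomputable def cayley (z : ℂ) : ℂ := (z - I) / (z + I)

/-- The inverse of the Cayley transform, mapping the unit disc onto the upper half-plane. -/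
noncomputable def cayleyInv (w : ℂ) : ℂ := I * (1 + w) / (1 - w)

theorem one_le_norm_add_I_of_im_nonneg {z : ℂ} (hz : 0 ≤ z.im) : 1 ≤ ‖z + I‖ := by
  refine le_trans ?_ ((le_abs_self _).trans (abs_im_le_norm (z + I)))
  simpa using hz

theorem add_I_ne_zero_of_im_nonneg {z : ℂ} (hz : 0 ≤ z.im) : z + I ≠ 0 :=
  norm_pos_iff.1 (zero_lt_one.trans_le (one_le_norm_add_I_of_im_nonneg hz))

theorem one_sub_sq_norm_cayley {z : ℂ} (hz : 0 ≤ z.im) :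
    1 - ‖cayley z‖ ^ 2 = 4 * z.im / ‖z + I‖ ^ 2 := by
  have hne := norm_ne_zero_iff.2 (add_I_ne_zero_of_im_nonneg hz)
  rw [cayley, norm_div, div_pow, eq_div_iff (pow_ne_zero 2 hne), sub_mul,
    div_mul_cancel₀ _ (pow_ne_zero 2 hne), Complex.sq_norm, Complex.sq_norm, normSq_apply,
    normSq_apply]
  simp only [add_re, add_im, sub_re, sub_im, I_re, I_im]
  ring

theorem cayley_mem_ball {z : ℂ} (hz : z ∈ UHP) : cayley z ∈ ball (0 : ℂ) 1 := by
  have hz' : 0 < z.im := hz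
  have hne := norm_pos_iff.2 (add_I_ne_zero_of_im_nonneg hz'.le)
  have hpos : 0 < 1 - ‖cayley z‖ ^ 2 := by
    rw [one_sub_sq_norm_cayley hz'.le]
    positivity
  rw [mem_ball_zero_iff]
  nlinarith [norm_nonneg (cayley z)]

theorem one_sub_ne_zero_of_mem_ball {w : ℂ} (hw : w ∈ ball (0 : ℂ) 1) : 1 - w ≠ 0 := fun h => by
  simp [← sub_eq_zero.1 h] at hw

theorem cayleyInv_mem_UHP {w : ℂ} (hw : w ∈ ball (0 : ℂ) 1) : cayleyInv w ∈ UHP := by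
  have him : (cayleyInv w).im = (1 - ‖w‖ ^ 2) / normSq (1 - w) := by
    rw [cayleyInv, div_im, Complex.sq_norm, normSq_apply w, ← sub_div]
    congr 1
    simp only [mul_im, I_re, add_im, one_im, zero_add, zero_mul, I_im, add_re, one_re, one_mul,
      sub_re, mul_re, zero_sub, sub_im, mul_neg, neg_mul, neg_neg]
    ring
  have hw' : ‖w‖ < 1 := mem_ball_zero_iff.1 hw
  have hpos : 0 < (1 - ‖w‖ ^ 2) / normSq (1 - w) :=
    div_pos (by nlinarith [norm_nonneg w]) (normSq_pos.2 (one_sub_ne_zero_of_mem_ball hw))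
  rwa [← him] at hpos

theorem differentiableOn_cayleyInv : DifferentiableOn ℂ cayleyInv (ball 0 1) :=
  DifferentiableOn.div (by fun_prop) (by fun_prop) fun _ => one_sub_ne_zero_of_mem_ball

theorem cayleyInv_cayley {z : ℂ} (hz : z ∈ UHP) : cayleyInv (cayley z) = z := by
  have hne := add_I_ne_zero_of_im_nonneg (le_of_lt hz)
  have h₁ : 1 + cayley z = 2 * z / (z + I) := by
    rw [cayley]
    field_simp
    ring
  have h₂ : 1 - cayley z = 2 * I / (z + I) := by
    rw [cayley]
    field_simp
    ring
  rw [cayleyInv, h₁, h₂]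
  field_simp [I_ne_zero]

theorem exp_arctan_mul_I (s : ℝ) :
    exp ((Real.arctan s : ℝ) * I) = (Real.cos (Real.arctan s) : ℝ) * (I * (s - I)) := by
  have hsin : Real.sin (Real.arctan s) = s * Real.cos (Real.arctan s) := by
    rw [← Real.tan_mul_cos (Real.cos_arctan_pos s).ne', Real.tan_arctan]
  rw [exp_mul_I, ← ofReal_cos, ← ofReal_sin, hsin, mul_sub, I_mul_I]
  push_cast
  ring

theorem ofReal_cos_arctan_sq_mul (s : ℝ) :
    ((Real.cos (Real.arctan s) : ℝ) : ℂ) ^ 2 * ((s + I) * (s - I)) = 1 := by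
  have hs : ((s : ℂ) + I) * (s - I) = ((1 + s ^ 2 : ℝ) : ℂ) := by
    push_cast
    linear_combination -I_sq
  rw [hs, ← ofReal_pow, ← ofReal_mul, Real.cos_sq_arctan, one_div_mul_cancel (by positivity),
    ofReal_one]

theorem circleMap_cayleyAngle (s : ℝ) : circleMap 0 1 (cayleyAngle s) = cayley s := by
  calc circleMap 0 1 (cayleyAngle s) = exp (π * I + 2 * ((Real.arctan s : ℝ) * I)) := by
        simp only [circleMap_zero, cayleyAngle, ofReal_one, one_mul]
        push_cast
        ring_nf
    _ = -exp ((Real.arctan s : ℝ) * I) ^ 2 := by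
        rw [exp_add, exp_pi_mul_I, ← exp_nat_mul, neg_one_mul, Nat.cast_two]
    _ = ((Real.cos (Real.arctan s) : ℝ) : ℂ) ^ 2 * (s - I) ^ 2 := by
        rw [exp_arctan_mul_I, mul_pow, mul_pow, I_sq]
        ring
    _ = cayley s := by
        rw [cayley, eq_div_iff (add_I_ne_zero_of_im_nonneg (ofReal_im s).ge)]
        linear_combination ((s : ℂ) - I) * ofReal_cos_arctan_sq_mul s

theorem norm_cayley_ofReal (s : ℝ) : ‖cayley s‖ = 1 := by
  rw [← circleMap_cayleyAngle, norm_circleMap_zero, abs_one]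

theorem norm_cayley_sub_cayley {z w : ℂ} (hz : 0 ≤ z.im) (hw : 0 ≤ w.im) :
    ‖cayley z - cayley w‖ = 2 * ‖z - w‖ / (‖z + I‖ * ‖w + I‖) := by
  have h : cayley z - cayley w = 2 * I * (z - w) / ((z + I) * (w + I)) := by
    rw [cayley, cayley, div_sub_div _ _ (add_I_ne_zero_of_im_nonneg hz)
      (add_I_ne_zero_of_im_nonneg hw)]
    ring
  simp [h]

theorem poissonKernel_cayley {z : ℂ} (hz : z ∈ UHP) (s : ℝ) :
    2 / (1 + s ^ 2) * poissonKernel 0 (cayley z) (cayley s) =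
      2 * (z.im / ((z.re - s) ^ 2 + z.im ^ 2)) := by
  have hz' : 0 < z.im := hz
  have hzI := norm_ne_zero_iff.2 (add_I_ne_zero_of_im_nonneg hz'.le)
  have hs : ‖(s : ℂ) + I‖ ^ 2 = 1 + s ^ 2 := by
    rw [Complex.sq_norm, normSq_apply]
    simp only [add_re, ofReal_re, I_re, add_zero, add_im, ofReal_im, I_im, zero_add, mul_one]
    ring
  have hsz : ‖(s : ℂ) - z‖ ^ 2 = (z.re - s) ^ 2 + z.im ^ 2 := by
    rw [Complex.sq_norm, normSq_apply]
    simp only [sub_re, ofReal_re, sub_im, ofReal_im, zero_sub, mul_neg, neg_mul, neg_neg]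
    ring
  have h₀ : 1 + s ^ 2 ≠ 0 := by positivity
  have h₁ : (z.re - s) ^ 2 + z.im ^ 2 ≠ 0 := by positivity
  rw [poissonKernel_def]
  simp only [sub_zero]
  rw [norm_cayley_ofReal, one_pow, one_sub_sq_norm_cayley hz'.le,
    norm_cayley_sub_cayley (by simp) hz'.le, div_pow, mul_pow, mul_pow, hs, hsz]
  field_simp
  ring

end Cayley

section PoissonIntegral

/-- On `ℂ⁺`, the function `h` is the absolutely convergent Poisson integral of the boundary
function `u`; an outer function is a zero-free one whose `log |·|` has this form. -/
def IsPoissonIntegralUHP (h : ℂ → ℝ) (u : ℝ → ℝ) : Prop :=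
  (∀ z ∈ UHP, Integrable fun s : ℝ => (z.im / ((z.re - s) ^ 2 + z.im ^ 2)) * u s) ∧
    ∀ z ∈ UHP, h z = (1 / π) * ∫ s : ℝ, (z.im / ((z.re - s) ^ 2 + z.im ^ 2)) * u s

theorem IsPoissonIntegralUHP.add {h k : ℂ → ℝ} {u v : ℝ → ℝ} (hu : IsPoissonIntegralUHP h u)
    (hv : IsPoissonIntegralUHP k v) :
    IsPoissonIntegralUHP (fun z => h z + k z) fun s => u s + v s := by
  constructor <;> intro z hz <;> simp only [mul_add]
  · exact (hu.1 z hz).add (hv.1 z hz)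
  · rw [integral_add (hu.1 z hz) (hv.1 z hz), mul_add, ← hu.2 z hz, ← hv.2 z hz]

theorem IsPoissonIntegralUHP.congr {h k : ℂ → ℝ} {u : ℝ → ℝ} (hu : IsPoissonIntegralUHP h u)
    (hk : EqOn k h UHP) : IsPoissonIntegralUHP k u :=
  ⟨hu.1, fun z hz => (hk hz).trans (hu.2 z hz)⟩

theorem isPoissonIntegralUHP_comp_cayley {k : ℂ → ℝ} {u : ℝ → ℝ}
    (hu : IntegrableOn u (Ioo 0 (2 * π)))
    (hk : ∀ w ∈ ball (0 : ℂ) 1, k w =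
      (2 * π)⁻¹ * ∫ θ in Ioo 0 (2 * π), poissonKernel 0 w (circleMap 0 1 θ) * u θ) :
    IsPoissonIntegralUHP (fun z => k (cayley z)) fun s => u (cayleyAngle s) := by
  have hkernel : ∀ z ∈ UHP, ∀ s : ℝ, (2 / (1 + s ^ 2)) •
      (poissonKernel 0 (cayley z) (circleMap 0 1 (cayleyAngle s)) * u (cayleyAngle s)) =
        2 * ((z.im / ((z.re - s) ^ 2 + z.im ^ 2)) * u (cayleyAngle s)) := fun z hz s => by
    rw [circleMap_cayleyAngle, smul_eq_mul, ← mul_assoc, poissonKernel_cayley hz, mul_assoc]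
  refine ⟨fun z hz => ?_, fun z hz => ?_⟩
  · have hint : IntegrableOn
        (fun θ => poissonKernel 0 (cayley z) (circleMap 0 1 θ) * u θ) (Ioo 0 (2 * π)) := by
      rw [← integrableOn_Icc_iff_integrableOn_Ioo] at hu ⊢
      exact hu.continuousOn_mul
        (continuous_poissonKernel_circleMap (cayley_mem_ball hz)).continuousOn isCompact_Icc
    rw [integrableOn_Ioo_iff_integrable_comp_cayleyAngle] at hint
    simp only [hkernel z hz] at hint
    exact (integrable_const_mul_iff (isUnit_iff_ne_zero.2 two_ne_zero) _).1 hint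
  · simp only [hk _ (cayley_mem_ball hz), setIntegral_Ioo_eq_integral_comp_cayleyAngle,
      hkernel z hz, integral_const_mul]
    field_simp

theorem exists_isPoissonIntegralUHP_re {Q : ℂ → ℂ} (hQ : DifferentiableOn ℂ Q UHP) {B : ℝ}
    (hB : ∀ z ∈ UHP, |(Q z).im| ≤ B) : ∃ u, IsPoissonIntegralUHP (fun z => (Q z).re) u := by
  let q : ℂ → ℂ := Q ∘ cayleyInv
  have hq : DifferentiableOn ℂ q (ball 0 1) :=
    hQ.comp differentiableOn_cayleyInv fun _ => cayleyInv_mem_UHP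
  have hharm : HarmonicOnNhd (fun w => (q w).re) (ball 0 1) := fun w hw =>
    (hq.analyticAt (isOpen_ball.mem_nhds hw)).harmonicAt_re
  have hmean : ∀ r ∈ Ioo (0 : ℝ) 1,
      Real.circleAverage (fun w => (q w).re ^ 2) 0 r ≤ (q 0).re ^ 2 + B ^ 2 := by
    intro r hr
    have hsub : closedBall (0 : ℂ) |r| ⊆ ball 0 1 :=
      closedBall_subset_ball ((abs_of_pos hr.1).trans_lt hr.2)
    exact circleAverage_re_sq_le ((hq.mono hsub).diffContOnCl_ball subset_rfl)
      fun w hw => hB _ (cayleyInv_mem_UHP (hsub (sphere_subset_closedBall hw)))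
  obtain ⟨u, hu, hqu⟩ := exists_memLp_eq_poissonIntegral hharm one_pos hmean
  refine ⟨_, (isPoissonIntegralUHP_comp_cayley (hu.integrable one_le_two) hqu).congr
    fun z hz => ?_⟩
  simp only [q, Function.comp_apply, cayleyInv_cayley hz]

end PoissonIntegral

section Smirnov

theorem isOuterUHP_of_mapsTo_slitPlane {h : ℂ → ℂ} (hd : DifferentiableOn ℂ h UHP)
    (hs : MapsTo h UHP slitPlane) : IsOuterUHP h := by
  obtain ⟨u, hu⟩ := exists_isPoissonIntegralUHP_re (hd.clog hs) (B := π) fun z _ => by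
    simpa only [log_im] using abs_arg_le_pi (h z)
  exact ⟨fun z hz => slitPlane_ne_zero (hs hz), u, hu.congr fun z _ => (log_re _).symm⟩

theorem IsOuterUHP.mul {g h : ℂ → ℂ} (hg : IsOuterUHP g) (hh : IsOuterUHP h) :
    IsOuterUHP fun z => g z * h z := by
  obtain ⟨hg₀, u, hu⟩ := hg
  obtain ⟨hh₀, v, hv⟩ := hh
  refine ⟨fun z hz => mul_ne_zero (hg₀ z hz) (hh₀ z hz), _,
    (IsPoissonIntegralUHP.add hu hv).congr fun z hz => ?_⟩
  simp only [norm_mul]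
  exact Real.log_mul (norm_ne_zero_iff.2 (hg₀ z hz)) (norm_ne_zero_iff.2 (hh₀ z hz))

theorem BoundedAnalyticUHP.add {g h : ℂ → ℂ} (hg : BoundedAnalyticUHP g)
    (hh : BoundedAnalyticUHP h) : BoundedAnalyticUHP fun z => g z + h z := by
  obtain ⟨hg_diff, A, hA⟩ := hg
  obtain ⟨hh_diff, B, hB⟩ := hh
  exact ⟨hg_diff.add hh_diff, A + B, fun z hz => norm_add_le_of_le (hA z hz) (hB z hz)⟩

theorem BoundedAnalyticUHP.mul {g h : ℂ → ℂ} (hg : BoundedAnalyticUHP g)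
    (hh : BoundedAnalyticUHP h) : BoundedAnalyticUHP fun z => g z * h z := by
  obtain ⟨hg_diff, A, hA⟩ := hg
  obtain ⟨hh_diff, B, hB⟩ := hh
  exact ⟨hg_diff.mul hh_diff, A * B, fun z hz => norm_mul_le_of_le (hA z hz) (hB z hz)⟩

theorem boundedAnalyticUHP_const (a : ℂ) : BoundedAnalyticUHP fun _ => a :=
  ⟨differentiableOn_const a, ‖a‖, fun _ _ => le_rfl⟩

theorem SmirnovUHP.add {f g : ℂ → ℂ} (hf : SmirnovUHP f) (hg : SmirnovUHP g) :
    SmirnovUHP fun z => f z + g z := by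
  obtain ⟨f₁, f₂, hf₁, hf₂, hf_outer, hf_eq⟩ := hf
  obtain ⟨g₁, g₂, hg₁, hg₂, hg_outer, hg_eq⟩ := hg
  refine ⟨_, _, (hf₁.mul hg₂).add (hf₂.mul hg₁), hf₂.mul hg₂, hf_outer.mul hg_outer,
    fun z hz => ?_⟩
  simp only [hf_eq z hz, hg_eq z hz]
  exact div_add_div _ _ (hf_outer.1 z hz) (hg_outer.1 z hz)

theorem SmirnovUHP.const_mul {f : ℂ → ℂ} (hf : SmirnovUHP f) (a : ℂ) :
    SmirnovUHP fun z => a * f z := by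
  obtain ⟨g, h, hg, hh, h_outer, h_eq⟩ := hf
  refine ⟨_, h, (boundedAnalyticUHP_const a).mul hg, hh, h_outer, fun z hz => ?_⟩
  simp only [h_eq z hz, mul_div_assoc]

theorem SmirnovUHP.congr {f g : ℂ → ℂ} (hf : SmirnovUHP f) (hg : EqOn g f UHP) :
    SmirnovUHP g := by
  obtain ⟨f₁, f₂, hf₁, hf₂, hf_outer, hf_eq⟩ := hf
  exact ⟨f₁, f₂, hf₁, hf₂, hf_outer, fun z hz => (hg hz).trans (hf_eq z hz)⟩

theorem inv_add_I_mem_slitPlane_of_im_nonneg {z : ℂ} (hz : 0 ≤ z.im) :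
    (z + I)⁻¹ ∈ slitPlane := by
  have him : 0 < (z + I).im := by
    simp only [add_im, I_im]
    positivity
  refine mem_slitPlane_iff.2 (Or.inr ?_)
  rw [inv_im]
  exact div_ne_zero (neg_ne_zero.2 him.ne') (normSq_pos.2 (add_I_ne_zero_of_im_nonneg hz)).ne'

theorem smirnovUHP_of_im_nonneg {F : ℂ → ℂ} (hF : DifferentiableOn ℂ F UHP)
    (him : ∀ z ∈ UHP, 0 ≤ (F z).im) : SmirnovUHP F := by
  have hne : ∀ z ∈ UHP, F z + I ≠ 0 := fun z hz => add_I_ne_zero_of_im_nonneg (him z hz)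
  have hinv : BoundedAnalyticUHP fun z => (F z + I)⁻¹ := by
    refine ⟨(hF.add_const I).inv hne, 1, fun z hz => ?_⟩
    rw [norm_inv]
    exact inv_le_one_of_one_le₀ (one_le_norm_add_I_of_im_nonneg (him z hz))
  refine ⟨fun z => 1 + -I * (F z + I)⁻¹, fun z => (F z + I)⁻¹,
    (boundedAnalyticUHP_const 1).add ((boundedAnalyticUHP_const (-I)).mul hinv), hinv,
    isOuterUHP_of_mapsTo_slitPlane hinv.1
      fun z hz => inv_add_I_mem_slitPlane_of_im_nonneg (him z hz), fun z hz => ?_⟩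
  have := hne z hz
  field_simp
  ring

end Smirnov

section CauchySeries

theorem norm_div_sub_le {𝕜 : Type*} [NormedField 𝕜] {t z : 𝕜} {ε : ℝ} (c : 𝕜) (hε : 0 < ε)
    (h : ε ≤ ‖t - z‖) : ‖c / (t - z)‖ ≤ ‖c‖ / (1 + ‖t‖) * (1 + (1 + ‖z‖) / ε) := by
  have ht : 1 + ‖t‖ ≤ (1 + (1 + ‖z‖) / ε) * ‖t - z‖ :=
    calc 1 + ‖t‖ ≤ ‖t - z‖ + (1 + ‖z‖) / ε * ε := by
          rw [div_mul_cancel₀ _ hε.ne']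
          linarith [norm_le_norm_sub_add t z]
      _ ≤ ‖t - z‖ + (1 + ‖z‖) / ε * ‖t - z‖ := by gcongr
      _ = (1 + (1 + ‖z‖) / ε) * ‖t - z‖ := by ring
  rw [norm_div, div_mul_eq_mul_div, div_le_div_iff₀ (hε.trans_le h) (by positivity), mul_assoc]
  gcongr

theorem im_le_norm_sub_of_im_nonpos {t : ℂ} (ht : t.im ≤ 0) (z : ℂ) : z.im ≤ ‖t - z‖ := by
  refine le_trans ?_ ((neg_le_abs _).trans (abs_im_le_norm (t - z)))
  simpa using ht

theorem im_ofReal_div_sub_pos {r : ℝ} {t z : ℂ} (hr : 0 < r) (ht : t.im ≤ 0) (hz : z ∈ UHP) :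
    0 < ((r : ℂ) / (t - z)).im := by
  have hz' : 0 < z.im := hz
  have hne : t - z ≠ 0 := norm_pos_iff.1 (hz'.trans_le (im_le_norm_sub_of_im_nonpos ht z))
  have him : ((r : ℂ) / (t - z)).im = r * ((z.im - t.im) / normSq (t - z)) := by
    rw [div_im, ofReal_im, ofReal_re, sub_im]
    ring
  rw [him]
  exact mul_pos hr (div_pos (by linarith) (normSq_pos.2 hne))

theorem im_ofReal_div_sub_nonneg {r : ℝ} {t z : ℂ} (hr : 0 ≤ r) (ht : t.im ≤ 0) (hz : z ∈ UHP) :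
    0 ≤ ((r : ℂ) / (t - z)).im := by
  rcases hr.eq_or_lt with rfl | hr
  · simp
  · exact (im_ofReal_div_sub_pos hr ht hz).le

variable {ι : Type*} {t a b c : ι → ℂ} {z : ℂ}

/-- The Cauchy series `∑ᵢ cᵢ / (tᵢ - z)` with poles `t` and coefficients `c`. -/
noncomputable def cauchySeries (t c : ι → ℂ) (z : ℂ) : ℂ := ∑' i, c i / (t i - z)

theorem summable_norm_div_one_add_norm_of_norm_le (hc : Summable fun i => ‖c i‖ / (1 + ‖t i‖))
    (h : ∀ i, ‖a i‖ ≤ ‖c i‖) : Summable fun i => ‖a i‖ / (1 + ‖t i‖) :=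
  hc.of_nonneg_of_le (fun i => by positivity) fun i => by gcongr; exact h i

theorem hasSum_cauchySeries (ht : ∀ i, (t i).im ≤ 0)
    (hc : Summable fun i => ‖c i‖ / (1 + ‖t i‖)) (hz : z ∈ UHP) :
    HasSum (fun i => c i / (t i - z)) (cauchySeries t c z) :=
  (Summable.of_norm_bounded (hc.mul_right _) fun i =>
    norm_div_sub_le (c i) hz (im_le_norm_sub_of_im_nonpos (ht i) z)).hasSum

theorem differentiableOn_cauchySeries (ht : ∀ i, (t i).im ≤ 0)
    (hc : Summable fun i => ‖c i‖ / (1 + ‖t i‖)) :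
    DifferentiableOn ℂ (cauchySeries t c) UHP := by
  intro z₀ hz₀
  obtain ⟨ε, hε, hεz₀⟩ := exists_between (show 0 < z₀.im from hz₀)
  let U : Set ℂ := {z | ε < z.im} ∩ ball 0 (‖z₀‖ + 1)
  have hU : IsOpen U := (isOpen_lt continuous_const continuous_im).inter isOpen_ball
  have hz₀U : z₀ ∈ U := ⟨hεz₀, by simp⟩
  have hdist : ∀ i, ∀ z ∈ U, ε ≤ ‖t i - z‖ := fun i z hz =>
    (le_of_lt hz.1).trans (im_le_norm_sub_of_im_nonpos (ht i) z)
  have hd : DifferentiableOn ℂ (cauchySeries t c) U := by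
    refine differentiableOn_tsum_of_summable_norm
      (hc.mul_right (1 + (1 + (‖z₀‖ + 1)) / ε)) (fun i => ?_) hU fun i z hz => ?_
    · exact (differentiableOn_const _).div (by fun_prop) fun z hz =>
        norm_pos_iff.1 (hε.trans_le (hdist i z hz))
    · refine (norm_div_sub_le (c i) hε (hdist i z hz)).trans ?_
      have : ‖z‖ ≤ ‖z₀‖ + 1 := (mem_ball_zero_iff.1 hz.2).le
      gcongr
  exact (hd.differentiableAt (hU.mem_nhds hz₀U)).differentiableWithinAt

theorem cauchySeries_im_nonneg {r : ι → ℝ} (hr : ∀ i, 0 ≤ r i) (ht : ∀ i, (t i).im ≤ 0)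
    (hs : Summable fun i => ‖(r i : ℂ)‖ / (1 + ‖t i‖)) (hz : z ∈ UHP) :
    0 ≤ (cauchySeries t (fun i => r i) z).im :=
  (hasSum_im (hasSum_cauchySeries ht hs hz)).nonneg fun i =>
    im_ofReal_div_sub_nonneg (hr i) (ht i) hz

theorem cauchySeries_im_pos [Nonempty ι] {r : ι → ℝ} (hr : ∀ i, 0 < r i)
    (ht : ∀ i, (t i).im ≤ 0) (hs : Summable fun i => ‖(r i : ℂ)‖ / (1 + ‖t i‖)) (hz : z ∈ UHP) :
    0 < (cauchySeries t (fun i => r i) z).im := by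
  have hsum := hasSum_im (hasSum_cauchySeries ht hs hz)
  have hpos := fun i => im_ofReal_div_sub_pos (hr i) (ht i) hz
  rw [← hsum.tsum_eq]
  exact hsum.summable.tsum_pos (fun i => (hpos i).le) (Classical.arbitrary ι) (hpos _)

theorem smirnovUHP_cauchySeries_of_nonneg {r : ι → ℝ} (hr : ∀ i, 0 ≤ r i)
    (ht : ∀ i, (t i).im ≤ 0) (hs : Summable fun i => ‖(r i : ℂ)‖ / (1 + ‖t i‖)) :
    SmirnovUHP (cauchySeries t fun i => r i) :=
  smirnovUHP_of_im_nonneg (differentiableOn_cauchySeries ht hs) fun _ =>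
    cauchySeries_im_nonneg hr ht hs

theorem SmirnovUHP.cauchySeries_add_const_mul (hSa : SmirnovUHP (cauchySeries t a))
    (hSb : SmirnovUHP (cauchySeries t b)) (ht : ∀ i, (t i).im ≤ 0)
    (ha : Summable fun i => ‖a i‖ / (1 + ‖t i‖)) (hb : Summable fun i => ‖b i‖ / (1 + ‖t i‖))
    (x : ℂ) : SmirnovUHP (cauchySeries t fun i => a i + x * b i) := by
  refine (hSa.add (hSb.const_mul x)).congr fun z hz => ?_
  simp only [cauchySeries, add_div, mul_div_assoc]
  exact ((hasSum_cauchySeries ht ha hz).add ((hasSum_cauchySeries ht hb hz).mul_left x)).tsum_eq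

theorem smirnovUHP_cauchySeries_ofReal {r : ι → ℝ} (ht : ∀ i, (t i).im ≤ 0)
    (hr : Summable fun i => ‖(r i : ℂ)‖ / (1 + ‖t i‖)) :
    SmirnovUHP (cauchySeries t fun i => r i) := by
  have hadd : ∀ i, ‖((r i)⁺ : ℝ)‖ + ‖((r i)⁻ : ℝ)‖ = ‖(r i : ℂ)‖ := fun i => by
    rw [Real.norm_of_nonneg (posPart_nonneg _), Real.norm_of_nonneg (negPart_nonneg _),
      posPart_add_negPart, norm_real, Real.norm_eq_abs]
  have hpos : Summable fun i => ‖(((r i)⁺ : ℝ) : ℂ)‖ / (1 + ‖t i‖) :=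
    summable_norm_div_one_add_norm_of_norm_le hr fun i => by
      rw [norm_real]
      exact (le_add_of_nonneg_right (norm_nonneg _)).trans_eq (hadd i)
  have hneg : Summable fun i => ‖(((r i)⁻ : ℝ) : ℂ)‖ / (1 + ‖t i‖) :=
    summable_norm_div_one_add_norm_of_norm_le hr fun i => by
      rw [norm_real]
      exact (le_add_of_nonneg_left (norm_nonneg _)).trans_eq (hadd i)
  convert SmirnovUHP.cauchySeries_add_const_mul
    (smirnovUHP_cauchySeries_of_nonneg (fun i => posPart_nonneg (r i)) ht hpos)
    (smirnovUHP_cauchySeries_of_nonneg (fun i => negPart_nonneg (r i)) ht hneg)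
    ht hpos hneg (-1) using 2
  funext i
  rw [neg_one_mul, ← sub_eq_add_neg, ← ofReal_sub, posPart_sub_negPart]

theorem smirnovUHP_cauchySeries (ht : ∀ i, (t i).im ≤ 0)
    (hc : Summable fun i => ‖c i‖ / (1 + ‖t i‖)) : SmirnovUHP (cauchySeries t c) := by
  have hre : Summable fun i => ‖((c i).re : ℂ)‖ / (1 + ‖t i‖) :=
    summable_norm_div_one_add_norm_of_norm_le hc fun i => by
      simpa only [norm_real, Real.norm_eq_abs] using abs_re_le_norm (c i)
  have him : Summable fun i => ‖((c i).im : ℂ)‖ / (1 + ‖t i‖) :=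
    summable_norm_div_one_add_norm_of_norm_le hc fun i => by
      simpa only [norm_real, Real.norm_eq_abs] using abs_im_le_norm (c i)
  convert SmirnovUHP.cauchySeries_add_const_mul (smirnovUHP_cauchySeries_ofReal ht hre)
    (smirnovUHP_cauchySeries_ofReal ht him) ht hre him I using 2
  funext i
  rw [mul_comm, re_add_im]

theorem summable_norm_div_one_add_norm_of_norm_div (ht : ∀ i, t i ≠ 0)
    (hc : Summable fun i => ‖c i‖ / ‖t i‖) : Summable fun i => ‖c i‖ / (1 + ‖t i‖) :=
  hc.of_nonneg_of_le (fun i => by positivity) fun i =>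
    div_le_div_of_nonneg_left (norm_nonneg _) (norm_pos_iff.2 (ht i))
      (le_add_of_nonneg_left zero_le_one)

end CauchySeries

theorem stmt18_general {ι : Type*} [Nonempty ι] (t : ι → ℂ) (ht : ∀ i, (t i).im ≤ 0) (c : ι → ℂ)
    (hc : Summable fun i => ‖c i‖ / (1 + ‖t i‖)) (f : ℂ → ℂ)
    (hf : ∀ z ∈ UHP, f z = ∑' i, c i / (t i - z)) :
    SmirnovUHP f ∧
      ((∀ i, ∃ r : ℝ, 0 < r ∧ c i = (r : ℂ)) → ∀ z ∈ UHP, 0 < (f z).im) := by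
  refine ⟨(smirnovUHP_cauchySeries ht hc).congr hf, fun hpos z hz => ?_⟩
  choose r hr hcr using hpos
  obtain rfl : c = fun i => (r i : ℂ) := funext hcr
  rw [hf z hz]
  exact cauchySeries_im_pos hr ht hc hz

/-- Let `f(z) = Σₙ cₙ/(tₙ − z)` with all poles `tₙ` in the closed
lower half-plane, `tₙ ≠ 0` and `Σₙ |cₙ|/|tₙ| < ∞`. Then `f` belongs to the Smirnov
class in `ℂ⁺`; in particular, if all `cₙ` are positive reals then `Im f > 0` on `ℂ⁺`. -/
theorem stmt18 (t : ℕ → ℂ) (ht0 : ∀ n, t n ≠ 0) (htim : ∀ n, (t n).im ≤ 0)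
    (c : ℕ → ℂ) (hc : Summable fun n => ‖c n‖ / ‖t n‖)
    (f : ℂ → ℂ) (hf : ∀ z ∈ UHP, f z = ∑' n, c n / (t n - z)) :
    SmirnovUHP f ∧
      ((∀ n, ∃ r : ℝ, 0 < r ∧ c n = (r : ℂ)) → ∀ z ∈ UHP, 0 < (f z).im) :=
  stmt18_general t htim c (summable_norm_div_one_add_norm_of_norm_div ht0 hc) f hf
end
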